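/- Let φ : D → D be an irrational pseudo-rotation. Then for every integer n ≥ 1, the linearization D(φⁿ)(0) of the n-th iterate of φ at the origin does not have 1 as an eigenvalue; in particular the fixed point 0 is non-degenerate for every iterate of φ. Moreover, Dφ(0) has no real eigenvalues at all. -/

import Mathlib

open Complex Metric Set

/-- The closed unit disk in `ℂ ≅ ℝ²`. -/
def Disk : Set ℂ := Metric.closedBall 0 1

/-- A `C^∞`-smooth diffeomorphism of the closed unit disk: a bijection of `Disk`
which is `C^∞` up to the boundary together with its inverse. -/
structure SmoothDiskDiffeo where
  toFun : ℂ → ℂ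
  invFun : ℂ → ℂ
  mapsTo : Set.MapsTo toFun Disk Disk
  mapsTo_inv : Set.MapsTo invFun Disk Disk
  left_inv : ∀ z ∈ Disk, invFun (toFun z) = z
  right_inv : ∀ z ∈ Disk, toFun (invFun z) = z
  smooth : ContDiffOn ℝ (⊤ : ℕ∞) toFun Disk
  smooth_inv : ContDiffOn ℝ (⊤ : ℕ∞) invFun Disk

/-!
Blow up the fixed point `0` to the circle of directions: in polar coordinates the map becomes an
annulus map, and its lift to the strip acts on the bottom line through the direction of `Dφ(0) v`.
If `Dφⁿ(0)` has a real eigenvalue, then `Dφ²ⁿ(0)` has a positive one, and a lift `F` of `φ²ⁿ` fixes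
a point of the bottom line. Without periodic points, `F` moves the points of the top line by an
unbounded amount under iteration, so some iterate of `F`, composed with a deck translation,
displaces the two boundary lines in opposite directions. The Poincaré–Birkhoff theorem then yields
a fixed point of that composition, hence a periodic point of `φ`.

For the Poincaré–Birkhoff theorem, a fixed-point-free lift is composed with a small vertical push.
Since the area of the disk is finite, some orbit climbs from the bottom to the top. The direction of
`F z - z` turns along that orbit as it does along a simple arc joining the two boundary lines. The
opposite push gives the opposite turning, unless the boundary displacements have the same sign.
-/

open scoped FourierTransform

/-! ### Continuous logarithms -/

theorem exists_continuousOn_log {E : Type*} [AddCommGroup E] [Module ℝ E] [TopologicalSpace E]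
    [IsTopologicalAddGroup E] [ContinuousSMul ℝ E] [LocallyConvexSpace ℝ E] {S : Set E}
    (hS : Convex ℝ S) {g : E → ℂ} (hg : ContinuousOn g S) (h0 : ∀ x ∈ S, g x ≠ 0) :
    ∃ L : E → ℂ, ContinuousOn L S ∧ ∀ x ∈ S, exp (L x) = g x := by
  classical
  rcases S.eq_empty_or_nonempty with rfl | hne
  · exact ⟨0, continuousOn_empty _, by simp⟩
  have := hS.contractibleSpace hne
  have := hS.locallyPathConnectedSpace
  obtain ⟨x₀, hx₀⟩ := hne
  obtain ⟨L, ⟨-, hL⟩, -⟩ := isCoveringMapOn_exp.existsUnique_continuousMap_lifts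
    ⟨S.domRestrict g, hg.domRestrict⟩ (a₀ := ⟨x₀, hx₀⟩) (exp_log (h0 x₀ hx₀)) (fun x => h0 x x.2)
  refine ⟨fun x => if hx : x ∈ S then L ⟨x, hx⟩ else 0, ?_, fun x hx => ?_⟩
  · rw [continuousOn_iff_continuous_domRestrict]
    exact L.continuous.congr fun x => by simp
  · simpa only [hx, dif_pos] using! congr_fun hL ⟨x, hx⟩

theorem sub_eq_sub_of_exp_eq_exp {X : Type*} [TopologicalSpace X] {S : Set X}
    (hS : IsPreconnected S) {L₁ L₂ : X → ℂ} (h₁ : ContinuousOn L₁ S) (h₂ : ContinuousOn L₂ S)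
    (h : ∀ x ∈ S, exp (L₁ x) = exp (L₂ x)) {a b : X} (ha : a ∈ S) (hb : b ∈ S) :
    L₁ a - L₂ a = L₁ b - L₂ b := by
  have hL : EqOn L₁ (fun x => L₂ x + (L₁ a - L₂ a)) S := by
    refine isCoveringMap_exp.eqOn_of_comp_eqOn hS h₁ (h₂.add continuousOn_const)
      (fun x hx => Subtype.ext ?_) ha (by simp)
    simp [exp_add, exp_sub, h a ha, h x hx]
  linear_combination -hL hb

theorem continuousOn_log_im_nonneg : ContinuousOn log {z | z ≠ 0 ∧ 0 ≤ z.im} := by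
  rintro z ⟨hz, -⟩
  by_cases hslit : z ∈ slitPlane
  · exact (continuousAt_clog hslit).continuousWithinAt
  · simp only [mem_slitPlane_iff, not_or, not_lt, not_not] at hslit
    have hre : z.re < 0 := hslit.1.lt_of_ne fun h => hz (Complex.ext h hslit.2)
    exact (continuousWithinAt_log_of_re_neg_of_im_zero hre hslit.2).mono fun w hw => hw.2

theorem sub_log_exp_eq_sub_log_exp {X : Type*} [TopologicalSpace X] {S : Set X}
    (hS : IsPreconnected S) {L : X → ℂ} (hL : ContinuousOn L S)
    (him : ∀ x ∈ S, 0 ≤ (exp (L x)).im) {a b : X} (ha : a ∈ S) (hb : b ∈ S) :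
    L a - log (exp (L a)) = L b - log (exp (L b)) :=
  sub_eq_sub_of_exp_eq_exp (L₂ := fun x => log (exp (L x))) hS hL
    (continuousOn_log_im_nonneg.comp hL.cexp fun x hx => ⟨exp_ne_zero _, him x hx⟩)
    (fun x _ => (exp_log (exp_ne_zero (L x))).symm) ha hb

/-! ### The turning of an arc -/

/-- The parameters `(s, t)` of the chords `Γ t - Γ s` of an arc `Γ` on `[0, T + 1]` that span at
least one unit of time. -/
def chordTriangle (T : ℝ) : Set (ℝ × ℝ) := {p | 0 ≤ p.1 ∧ p.1 + 1 ≤ p.2 ∧ p.2 ≤ T + 1}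

theorem convex_chordTriangle (T : ℝ) : Convex ℝ (chordTriangle T) := by
  rintro ⟨s, t⟩ ⟨h1, h2, h3⟩ ⟨s', t'⟩ ⟨h1', h2', h3'⟩ a b ha hb hab
  dsimp only at h1 h2 h3 h1' h2' h3'
  refine ⟨?_, ?_, ?_⟩ <;> simp only [Prod.smul_mk, Prod.mk_add_mk, smul_eq_mul]
  · positivity
  · linarith [mul_le_mul_of_nonneg_left h2 ha, mul_le_mul_of_nonneg_left h2' hb]
  · linarith [mul_le_mul_of_nonneg_left h3 ha, mul_le_mul_of_nonneg_left h3' hb,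
      congr_arg (· * (T + 1)) hab]

theorem exists_log_chord {Γ : ℝ → ℂ} {T : ℝ} (hc : ContinuousOn Γ (Icc 0 (T + 1)))
    (hinj : InjOn Γ (Icc 0 (T + 1))) :
    ∃ Λ : ℝ × ℝ → ℂ, ContinuousOn Λ (chordTriangle T) ∧
      ∀ p ∈ chordTriangle T, exp (Λ p) = Γ p.2 - Γ p.1 := by
  have fst_mem : MapsTo Prod.fst (chordTriangle T) (Icc 0 (T + 1)) :=
    fun p ⟨h1, h2, h3⟩ => ⟨h1, by linarith⟩
  have snd_mem : MapsTo Prod.snd (chordTriangle T) (Icc 0 (T + 1)) :=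
    fun p ⟨h1, h2, h3⟩ => ⟨by linarith, h3⟩
  refine exists_continuousOn_log (convex_chordTriangle T)
    ((hc.comp continuousOn_snd snd_mem).sub (hc.comp continuousOn_fst fst_mem)) fun p hp h => ?_
  linarith [hinj (snd_mem hp) (fst_mem hp) (sub_eq_zero.1 h), hp.2.1]

/-- The logarithm of the chord on `chordTriangle T` compares the hypotenuse `t = s + 1` with the two
legs `s = 0` and `t = T + 1`, along which the chord stays in the closed upper half plane. -/
theorem sub_log_chord_eq_of_lowest_of_highest {Γ : ℝ → ℂ} {T : ℝ} (hT : 0 ≤ T)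
    (hc : ContinuousOn Γ (Icc 0 (T + 1))) (hinj : InjOn Γ (Icc 0 (T + 1)))
    (hlow : ∀ t ∈ Icc 0 (T + 1), (Γ 0).im ≤ (Γ t).im)
    (hhigh : ∀ t ∈ Icc 0 (T + 1), (Γ t).im ≤ (Γ (T + 1)).im)
    {ℓ : ℝ → ℂ} (hℓ : ContinuousOn ℓ (Icc 0 T))
    (hexp : ∀ s ∈ Icc 0 T, exp (ℓ s) = Γ (s + 1) - Γ s) :
    ℓ T - log (Γ (T + 1) - Γ T) = ℓ 0 - log (Γ 1 - Γ 0) := by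
  obtain ⟨Λ, hΛ, hΛe⟩ := exists_log_chord hc hinj
  have hyp_mem : MapsTo (fun s => (s, s + 1)) (Icc 0 T) (chordTriangle T) :=
    fun s hs => ⟨hs.1, le_rfl, add_le_add_left hs.2 1⟩
  have bot_mem : MapsTo (fun t => (0, t)) (Icc 1 (T + 1)) (chordTriangle T) :=
    fun t ht => ⟨le_rfl, by simpa using ht.1, ht.2⟩
  have top_mem : MapsTo (fun s => (s, T + 1)) (Icc 0 T) (chordTriangle T) :=
    fun s hs => ⟨hs.1, add_le_add_left hs.2 1, le_rfl⟩
  have hyp : Λ (0, 0 + 1) - ℓ 0 = Λ (T, T + 1) - ℓ T :=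
    sub_eq_sub_of_exp_eq_exp (L₁ := fun s => Λ (s, s + 1)) isPreconnected_Icc
      (hΛ.comp (by fun_prop) hyp_mem) hℓ (fun s hs => by rw [hΛe _ (hyp_mem hs), hexp s hs])
      (left_mem_Icc.2 hT) (right_mem_Icc.2 hT)
  have bot := sub_log_exp_eq_sub_log_exp (L := fun t => Λ (0, t)) isPreconnected_Icc
    (hΛ.comp (by fun_prop) bot_mem)
    (fun t ht => by
      rw [hΛe _ (bot_mem ht), sub_im, sub_nonneg]
      exact hlow t ⟨zero_le_one.trans ht.1, ht.2⟩)
    (left_mem_Icc.2 (by linarith)) (right_mem_Icc.2 (by linarith))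
  have top := sub_log_exp_eq_sub_log_exp (L := fun s => Λ (s, T + 1)) isPreconnected_Icc
    (hΛ.comp (by fun_prop) top_mem)
    (fun s hs => by
      rw [hΛe _ (top_mem hs), sub_im, sub_nonneg]
      exact hhigh s ⟨hs.1, by linarith [hs.2]⟩)
    (left_mem_Icc.2 hT) (right_mem_Icc.2 hT)
  rw [hΛe _ (bot_mem ⟨le_rfl, by linarith⟩), hΛe _ (bot_mem ⟨by linarith, le_rfl⟩)] at bot
  rw [hΛe _ (top_mem ⟨le_rfl, hT⟩), hΛe _ (top_mem ⟨hT, le_rfl⟩)] at top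
  rw [zero_add] at hyp
  linear_combination hyp - bot - top

/-! ### Translation arcs -/

section OrbitArc

variable {E : Type*} [AddCommGroup E] [Module ℝ E] {G : E → E} {z : E}

/-- The arc through the orbit of `z` under `G` obtained by joining `z` to `G z` by a segment and
pushing that segment forward; `t` runs along the `n`-th image for `n ≤ t < n + 1`. It is meant for
`0 ≤ t` only. -/
noncomputable def orbitArc (G : E → E) (z : E) (t : ℝ) : E :=
  G^[⌊t⌋₊] (AffineMap.lineMap z (G z) (Int.fract t))

theorem orbitArc_add_one {t : ℝ} (ht : 0 ≤ t) : orbitArc G z (t + 1) = G (orbitArc G z t) := by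
  rw [orbitArc, Nat.floor_add_one ht, Function.iterate_succ_apply', Int.fract_add_one, orbitArc]

theorem orbitArc_add_natCast {t : ℝ} (ht : 0 ≤ t) (n : ℕ) :
    orbitArc G z (t + n) = G^[n] (orbitArc G z t) := by
  induction n with
  | zero => simp
  | succ n ih =>
    rw [Nat.cast_add_one, ← add_assoc, orbitArc_add_one (by positivity), ih,
      Function.iterate_succ_apply']

theorem orbitArc_of_mem_Ico {t : ℝ} (ht : t ∈ Ico (0 : ℝ) 1) :
    orbitArc G z t = AffineMap.lineMap z (G z) t := by
  rw [orbitArc, Nat.floor_eq_zero.2 ht.2, Int.fract_eq_self.2 ht, Function.iterate_zero_apply]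

@[simp]
theorem orbitArc_zero : orbitArc G z 0 = z := by
  simp [orbitArc]

@[simp]
theorem orbitArc_one : orbitArc G z 1 = G z := by
  simpa using orbitArc_add_one (G := G) (z := z) le_rfl

theorem orbitArc_of_mem_Icc {t : ℝ} (ht : t ∈ Icc (0 : ℝ) 1) :
    orbitArc G z t = AffineMap.lineMap z (G z) t := by
  rcases ht.2.lt_or_eq with h | rfl
  · exact orbitArc_of_mem_Ico ⟨ht.1, h⟩
  · simp

theorem continuousOn_orbitArc [TopologicalSpace E] [IsTopologicalAddGroup E] [ContinuousSMul ℝ E]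
    (hG : Continuous G) (z : E) : ContinuousOn (orbitArc G z) (Ici 0) := by
  have first : ContinuousOn (orbitArc G z) (Icc 0 1) :=
    (AffineMap.lineMap_continuous (R := ℝ)).continuousOn.congr fun t => orbitArc_of_mem_Icc
  have upto (n : ℕ) : ContinuousOn (orbitArc G z) (Icc 0 (n + 1)) := by
    induction n with
    | zero => simpa using first
    | succ n ih =>
      have rest : ContinuousOn (orbitArc G z) (Icc 1 (n + 1 + 1)) := by
        have shifted : ContinuousOn (fun t => G (orbitArc G z (t - 1))) (Icc 1 (n + 1 + 1)) :=
          hG.comp_continuousOn <| ih.comp (by fun_prop) fun t ht =>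
            ⟨sub_nonneg.2 ht.1, sub_le_iff_le_add.2 ht.2⟩
        refine shifted.congr fun t ht => ?_
        simpa using orbitArc_add_one (G := G) (z := z) (sub_nonneg.2 ht.1)
      have hn : (1 : ℝ) ≤ n + 1 + 1 := by linarith [n.cast_nonneg (α := ℝ)]
      rw [Nat.cast_add_one, ← Icc_union_Icc_eq_Icc zero_le_one hn]
      exact first.union_of_isClosed rest isClosed_Icc isClosed_Icc
  intro t ht
  have htn : t < ⌈t⌉₊ + 1 := (Nat.le_ceil t).trans_lt (lt_add_one _)
  refine (upto ⌈t⌉₊ t ⟨ht, htn.le⟩).mono_of_mem_nhdsWithin ?_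
  exact Filter.inter_mem self_mem_nhdsWithin (mem_nhdsWithin_of_mem_nhds (Iic_mem_nhds htn))

theorem injOn_orbitArc (hG : Function.Injective G)
    (hdisj : ∀ n ≥ 1, ∀ r ∈ Ico (0 : ℝ) 1, ∀ s ∈ Ico (0 : ℝ) 1,
      G^[n] (AffineMap.lineMap z (G z) r) ≠ AffineMap.lineMap z (G z) s) :
    InjOn (orbitArc G z) (Ici 0) := by
  have hne : z ≠ G z := fun h =>
    hdisj 1 le_rfl 0 (by simp) 0 (by simp) (by simpa using h.symm)
  have floor_add_fract {t : ℝ} (ht : 0 ≤ t) : (⌊t⌋₊ : ℝ) + Int.fract t = t := by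
    rw [natCast_floor_eq_intCast_floor ht, Int.floor_add_fract]
  have fract_mem (t : ℝ) : Int.fract t ∈ Ico (0 : ℝ) 1 := ⟨Int.fract_nonneg t, Int.fract_lt_one t⟩
  intro s hs t ht hst
  wlog hle : ⌊s⌋₊ ≤ ⌊t⌋₊ generalizing s t
  · exact (this ht hs hst.symm (le_of_not_ge hle)).symm
  obtain ⟨k, hk⟩ := Nat.exists_eq_add_of_le hle
  have hseg : AffineMap.lineMap z (G z) (Int.fract s) =
      G^[k] (AffineMap.lineMap z (G z) (Int.fract t)) := by
    rw [orbitArc, orbitArc, hk, Function.iterate_add_apply] at hst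
    exact hG.iterate _ hst
  rcases Nat.eq_zero_or_pos k with rfl | hk0
  · rw [← floor_add_fract hs, ← floor_add_fract ht, hk, add_zero,
      AffineMap.lineMap_injective ℝ hne hseg]
  · exact absurd hseg.symm (hdisj k hk0 _ (fract_mem t) _ (fract_mem s))

end OrbitArc

/-! ### Strip maps -/

/-- The closed strip `0 ≤ im z ≤ 1`. -/
def strip : Set ℂ := im ⁻¹' Icc 0 1

theorem mem_strip {z : ℂ} : z ∈ strip ↔ 0 ≤ z.im ∧ z.im ≤ 1 := Iff.rfl

/-- The vertical nearest-point retraction of the plane onto `strip`. -/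
def stripProj (z : ℂ) : ℂ := ⟨z.re, max 0 (min z.im 1)⟩

@[simp]
theorem stripProj_re (z : ℂ) : (stripProj z).re = z.re := rfl

theorem stripProj_im (z : ℂ) : (stripProj z).im = max 0 (min z.im 1) := rfl

theorem stripProj_mem (z : ℂ) : stripProj z ∈ strip := by
  rw [mem_strip, stripProj_im]
  exact ⟨le_max_left _ _, max_le zero_le_one (min_le_right _ _)⟩

theorem stripProj_of_mem {z : ℂ} (hz : z ∈ strip) : stripProj z = z :=
  Complex.ext rfl (by rw [stripProj_im, min_eq_left hz.2, max_eq_right hz.1])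

theorem stripProj_of_im_nonpos {z : ℂ} (hz : z.im ≤ 0) : stripProj z = z.re :=
  Complex.ext rfl (by rw [stripProj_im, min_eq_left (hz.trans zero_le_one), max_eq_left hz,
    ofReal_im])

theorem stripProj_of_one_le_im {z : ℂ} (hz : 1 ≤ z.im) : stripProj z = z.re + I :=
  Complex.ext (by simp) (by simp [stripProj_im, hz])

@[fun_prop]
theorem continuous_stripProj : Continuous stripProj := by
  have : stripProj = fun z => (z.re : ℂ) + (max 0 (min z.im 1) : ℝ) * I := by
    ext z : 1
    exact (re_add_im (stripProj z)).symm
  rw [this]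
  fun_prop

theorem stripProj_add_one (z : ℂ) : stripProj (z + 1) = stripProj z + 1 :=
  Complex.ext (by simp) (by simp [stripProj_im])

theorem stripProj_I_sub (z : ℂ) : stripProj (I - z) = I - stripProj z :=
  Complex.ext (by simp) (by simp only [stripProj_im, sub_im, I_im]; grind)

/-- Lifts to the universal cover of homeomorphisms of a closed annulus that preserve the two
boundary circles. They are extended to the plane vertically: outside `strip` a point is displaced
as the boundary point next to it. -/
structure StripMap (F : ℂ → ℂ) : Prop where
  continuous : Continuous F
  injective : Function.Injective F
  map_add_one : ∀ z, F (z + 1) = F z + 1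
  im_ofReal : ∀ x : ℝ, (F x).im = 0
  im_ofReal_add_I : ∀ x : ℝ, (F (x + I)).im = 1
  im_mem_Ioo : ∀ z : ℂ, z.im ∈ Ioo (0 : ℝ) 1 → (F z).im ∈ Ioo (0 : ℝ) 1
  sub_stripProj : ∀ z, F (stripProj z) - stripProj z = F z - z

namespace StripMap

variable {F G : ℂ → ℂ} {z : ℂ}

theorem of_strip (hc : ContinuousOn F strip) (hinj : InjOn F strip)
    (hadd : ∀ z ∈ strip, F (z + 1) = F z + 1) (hbot : ∀ x : ℝ, (F x).im = 0)
    (htop : ∀ x : ℝ, (F (x + I)).im = 1)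
    (hmid : ∀ z : ℂ, z.im ∈ Ioo (0 : ℝ) 1 → (F z).im ∈ Ioo (0 : ℝ) 1) :
    StripMap fun z => F (stripProj z) + (z - stripProj z) := by
  have hproj (z : ℂ) : stripProj (F (stripProj z) + (z - stripProj z)) = F (stripProj z) := by
    rcases le_or_gt z.im 0 with h0 | h0
    · rw [stripProj_of_im_nonpos h0, stripProj_of_im_nonpos (by simpa [hbot] using h0)]
      exact Complex.ext (by simp) (by simp [hbot])
    rcases le_or_gt 1 z.im with h1 | h1
    · rw [stripProj_of_one_le_im h1, stripProj_of_one_le_im (by simpa [htop] using h1)]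
      exact Complex.ext (by simp) (by simp [htop])
    · rw [stripProj_of_mem ⟨h0.le, h1.le⟩, sub_self, add_zero]
      exact stripProj_of_mem (Ioo_subset_Icc_self (hmid z ⟨h0, h1⟩))
  refine ⟨?_, fun z w hzw => ?_, fun z => ?_, fun x => ?_, fun x => ?_, fun z hz => ?_, fun z => ?_⟩
  · exact (hc.comp_continuous continuous_stripProj stripProj_mem).add
      (continuous_id.sub continuous_stripProj)
  · have hFzw : F (stripProj z) = F (stripProj w) := by
      rw [← hproj z, ← hproj w]
      exact congr_arg stripProj hzw
    have hproj_eq := hinj (stripProj_mem z) (stripProj_mem w) hFzw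
    simpa [hproj_eq] using hzw
  · rw [stripProj_add_one, hadd _ (stripProj_mem z)]
    ring
  · simp [stripProj_of_mem (z := x) (by simp [mem_strip]), hbot]
  · simp [stripProj_of_mem (z := x + I) (by simp [mem_strip]), htop]
  · simpa [stripProj_of_mem (Ioo_subset_Icc_self hz : z ∈ strip)] using hmid z hz
  · rw [stripProj_of_mem (stripProj_mem z)]
    ring

theorem im_of_nonpos (h : StripMap F) (hz : z.im ≤ 0) : (F z).im = z.im := by
  have := congr_arg im (h.sub_stripProj z)
  rw [stripProj_of_im_nonpos hz, sub_im, sub_im, h.im_ofReal, ofReal_im] at this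
  linarith

theorem im_of_one_le (h : StripMap F) (hz : 1 ≤ z.im) : (F z).im = z.im := by
  have := congr_arg im (h.sub_stripProj z)
  rw [stripProj_of_one_le_im hz, sub_im, sub_im, h.im_ofReal_add_I] at this
  simp only [add_im, ofReal_im, I_im, zero_add] at this
  linarith

theorem im_nonneg (h : StripMap F) (hz : 0 ≤ z.im) : 0 ≤ (F z).im := by
  rcases hz.eq_or_lt with h0 | h0
  · rw [h.im_of_nonpos h0.ge, ← h0]
  rcases le_or_gt 1 z.im with h1 | h1
  · rwa [h.im_of_one_le h1]
  · exact (h.im_mem_Ioo z ⟨h0, h1⟩).1.le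

theorem im_lt_one (h : StripMap F) (hz : z.im < 1) : (F z).im < 1 := by
  rcases le_or_gt z.im 0 with h0 | h0
  · rwa [h.im_of_nonpos h0]
  · exact (h.im_mem_Ioo z ⟨h0, hz⟩).2

theorem mapsTo_strip (h : StripMap F) : MapsTo F strip strip := by
  refine fun z hz => ⟨h.im_nonneg hz.1, ?_⟩
  rcases hz.2.lt_or_eq with h1 | h1
  · exact (h.im_lt_one h1).le
  · exact (h.im_of_one_le h1.ge).trans_le hz.2

theorem stripProj_map (h : StripMap F) (z : ℂ) : stripProj (F z) = F (stripProj z) := by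
  have him := congr_arg im (h.sub_stripProj z)
  have hre := congr_arg re (h.sub_stripProj z)
  simp only [sub_im, sub_re, stripProj_re] at him hre
  refine Complex.ext (by rw [stripProj_re]; linarith) ?_
  rcases le_total z.im 0 with h0 | h0
  · rw [stripProj_im, h.im_of_nonpos h0, ← stripProj_im, stripProj_of_im_nonpos h0, h.im_ofReal,
      ofReal_im]
  rcases le_total 1 z.im with h1 | h1
  · rw [stripProj_im, h.im_of_one_le h1, ← stripProj_im, stripProj_of_one_le_im h1,
      h.im_ofReal_add_I, add_im, ofReal_im, I_im, zero_add]
  · have hz : z ∈ strip := ⟨h0, h1⟩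
    rw [stripProj_of_mem (h.mapsTo_strip hz), stripProj_of_mem hz]

theorem map_add_intCast (h : StripMap F) (z : ℂ) (m : ℤ) : F (z + m) = F z + m :=
  AddConstMapClass.map_add_int (⟨F, h.map_add_one⟩ : AddConstMap ℂ ℂ 1 1) z m

protected theorem id : StripMap id where
  continuous := continuous_id
  injective := Function.injective_id
  map_add_one _ := rfl
  im_ofReal := ofReal_im
  im_ofReal_add_I := by simp
  im_mem_Ioo _ := id
  sub_stripProj := by simp

theorem comp (hF : StripMap F) (hG : StripMap G) : StripMap (F ∘ G) where
  continuous := hF.continuous.comp hG.continuous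
  injective := hF.injective.comp hG.injective
  map_add_one z := by simp only [Function.comp_apply, hG.map_add_one, hF.map_add_one]
  im_ofReal x := by
    rw [Function.comp_apply, hF.im_of_nonpos (hG.im_ofReal x).le, hG.im_ofReal]
  im_ofReal_add_I x := by
    rw [Function.comp_apply, hF.im_of_one_le (hG.im_ofReal_add_I x).ge, hG.im_ofReal_add_I]
  im_mem_Ioo z hz := hF.im_mem_Ioo _ (hG.im_mem_Ioo z hz)
  sub_stripProj z := by
    have hFG := hF.sub_stripProj (G z)
    rw [hG.stripProj_map] at hFG
    simp only [Function.comp_apply]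
    linear_combination hFG + hG.sub_stripProj z

theorem iterate (h : StripMap F) (n : ℕ) : StripMap F^[n] := by
  induction n with
  | zero => exact StripMap.id
  | succ n ih => exact ih.comp h

theorem add_intCast (h : StripMap F) (m : ℤ) : StripMap fun z => F z + m where
  continuous := h.continuous.add continuous_const
  injective := (add_left_injective _).comp h.injective
  map_add_one z := by rw [h.map_add_one, add_right_comm]
  im_ofReal x := by simp [h.im_ofReal]
  im_ofReal_add_I x := by simp [h.im_ofReal_add_I]
  im_mem_Ioo z hz := by simpa using h.im_mem_Ioo z hz
  sub_stripProj z := by linear_combination h.sub_stripProj z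

end StripMap

/-- Conjugation by the half-turn that exchanges the two boundary lines of `strip`. -/
def halfTurnConj (F : ℂ → ℂ) (z : ℂ) : ℂ := I - F (I - z)

theorem StripMap.halfTurnConj {F : ℂ → ℂ} (h : StripMap F) : StripMap (halfTurnConj F) where
  continuous := continuous_const.sub (h.continuous.comp (continuous_const.sub continuous_id))
  injective := sub_right_injective.comp (h.injective.comp sub_right_injective)
  map_add_one z := by
    have := h.map_add_one (I - (z + 1))
    rw [show I - (z + 1) + 1 = I - z by ring] at this
    simp only [_root_.halfTurnConj, this]
    ring
  im_ofReal x := by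
    simp [_root_.halfTurnConj, h.im_of_one_le (z := I - x)]
  im_ofReal_add_I x := by
    simp [_root_.halfTurnConj, h.im_of_nonpos (z := -x)]
  im_mem_Ioo z hz := by
    have := h.im_mem_Ioo (I - z) (by simpa using hz.symm)
    simpa [_root_.halfTurnConj] using this.symm
  sub_stripProj z := by
    have := h.sub_stripProj (I - z)
    rw [stripProj_I_sub] at this
    simp only [_root_.halfTurnConj]
    linear_combination -this

theorem StripMap.exists_pos_le_norm_sub {F : ℂ → ℂ} (h : StripMap F)
    (hfix : ∀ z ∈ strip, F z ≠ z) : ∃ δ > 0, ∀ z, δ ≤ ‖F z - z‖ := by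
  have hK : IsCompact (Icc (0 : ℝ) 1 ×ℂ Icc (0 : ℝ) 1) := isCompact_Icc.reProdIm isCompact_Icc
  obtain ⟨z₀, hz₀, hmin⟩ := hK.exists_isMinOn (f := fun z => ‖F z - z‖)
    ⟨0, by simp [mem_reProdIm]⟩ (h.continuous.sub continuous_id).norm.continuousOn
  refine ⟨‖F z₀ - z₀‖, norm_pos_iff.2 (sub_ne_zero.2 (hfix z₀ hz₀.2)), fun z => ?_⟩
  obtain ⟨w, hw⟩ : ∃ w, w = stripProj z + (-⌊z.re⌋ : ℤ) := ⟨_, rfl⟩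
  have hwK : w ∈ Icc (0 : ℝ) 1 ×ℂ Icc (0 : ℝ) 1 := by
    refine mem_reProdIm.2 ⟨?_, ?_⟩
    · have : w.re = Int.fract z.re := by simp [hw, Int.fract, sub_eq_add_neg]
      exact this ▸ ⟨Int.fract_nonneg _, (Int.fract_lt_one _).le⟩
    · simpa [hw, mem_strip] using stripProj_mem z
  calc ‖F z₀ - z₀‖ ≤ ‖F w - w‖ := hmin hwK
    _ = ‖F z - z‖ := by
      rw [hw, h.map_add_intCast, add_sub_add_right_eq_sub, h.sub_stripProj]

/-! ### Boundary maps of a strip map -/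

theorem monotone_of_map_add_one {g : ℝ → ℝ} (hc : Continuous g) (hinj : Function.Injective g)
    (hadd : ∀ x, g (x + 1) = g x + 1) : Monotone g := by
  refine (hc.strictMono_of_inj hinj).elim StrictMono.monotone fun hanti => ?_
  linarith [hanti zero_lt_one, zero_add (1 : ℝ) ▸ hadd 0]

theorem surjective_lineMap_apply (f : CircleDeg1Lift) (hf : Continuous f) {s : ℝ}
    (hs : s ∈ Icc (0 : ℝ) 1) : Function.Surjective fun x => AffineMap.lineMap x (f x) s := by
  let g : CircleDeg1Lift :=
    { toFun x := AffineMap.lineMap x (f x) s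
      monotone' x y hxy := lineMap_mono_endpoints hxy (f.monotone hxy) hs.1 hs.2
      map_add_one' x := by simp only [f.map_add_one, AffineMap.lineMap_apply_module']; ring }
  have hg : Continuous g := by
    change Continuous fun x => AffineMap.lineMap x (f x) s
    simp only [AffineMap.lineMap_apply_module']
    fun_prop
  exact g.continuous_iff_surjective.1 hg

namespace StripMap

variable {F : ℂ → ℂ}

theorem map_ofReal (h : StripMap F) (x : ℝ) : F x = (F x).re :=
  Complex.ext rfl (by rw [h.im_ofReal, ofReal_im])

theorem map_ofReal_add_I (h : StripMap F) (x : ℝ) : F (x + I) = (F (x + I)).re + I :=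
  Complex.ext (by simp) (by simp [h.im_ofReal_add_I])

/-- The action of a strip map on the line `im z = 0`. -/
def bottomLift (h : StripMap F) : CircleDeg1Lift where
  toFun x := (F x).re
  monotone' := by
    refine monotone_of_map_add_one (by have := h.continuous; fun_prop) (fun x y hxy => ?_)
      fun x => ?_
    · exact ofReal_injective <| h.injective <| by rw [h.map_ofReal, h.map_ofReal y, hxy]
    · rw [ofReal_add, ofReal_one, h.map_add_one, add_re, one_re]
  map_add_one' x := by rw [ofReal_add, ofReal_one, h.map_add_one, add_re, one_re]

/-- The action of a strip map on the line `im z = 1`. -/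
def topLift (h : StripMap F) : CircleDeg1Lift where
  toFun x := (F (x + I)).re
  monotone' := by
    refine monotone_of_map_add_one (by have := h.continuous; fun_prop) (fun x y hxy => ?_)
      fun x => ?_
    · refine ofReal_injective <| add_left_injective I <| h.injective ?_
      rw [h.map_ofReal_add_I, h.map_ofReal_add_I y, hxy]
    · rw [ofReal_add, ofReal_one, add_right_comm, h.map_add_one, add_re, one_re]
  map_add_one' x := by
    rw [ofReal_add, ofReal_one, add_right_comm, h.map_add_one, add_re, one_re]

theorem ofReal_bottomLift (h : StripMap F) (x : ℝ) : (h.bottomLift x : ℂ) = F x :=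
  (h.map_ofReal x).symm

theorem ofReal_topLift (h : StripMap F) (x : ℝ) : (h.topLift x + I : ℂ) = F (x + I) :=
  (h.map_ofReal_add_I x).symm

theorem continuous_bottomLift (h : StripMap F) : Continuous h.bottomLift :=
  continuous_re.comp (h.continuous.comp continuous_ofReal)

theorem continuous_topLift (h : StripMap F) : Continuous h.topLift :=
  continuous_re.comp (h.continuous.comp (continuous_ofReal.add continuous_const))

theorem ofReal_bottomLift_pow (h : StripMap F) (n : ℕ) (x : ℝ) :
    ((h.bottomLift ^ n) x : ℂ) = F^[n] x := by
  rw [CircleDeg1Lift.coe_pow]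
  exact Function.Semiconj.iterate_right (f := ofReal) h.ofReal_bottomLift n x

theorem ofReal_topLift_pow (h : StripMap F) (n : ℕ) (x : ℝ) :
    ((h.topLift ^ n) x + I : ℂ) = F^[n] (x + I) := by
  rw [CircleDeg1Lift.coe_pow]
  exact Function.Semiconj.iterate_right (f := fun x : ℝ => (x + I : ℂ)) h.ofReal_topLift n x

end StripMap

/-! ### Pushing a strip map upwards -/

/-- The map `F` followed by the upward translation by `ε`. -/
def push (F : ℂ → ℂ) (ε : ℝ) (z : ℂ) : ℂ := F z + ε * I

@[simp]
theorem push_re (F : ℂ → ℂ) (ε : ℝ) (z : ℂ) : (push F ε z).re = (F z).re := by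
  simp [push]

@[simp]
theorem push_im (F : ℂ → ℂ) (ε : ℝ) (z : ℂ) : (push F ε z).im = (F z).im + ε := by
  simp [push]

/-- However small the push, some point close to the bottom of the strip is pushed beyond the top.
For lifts of area-preserving maps this holds by finiteness of area. -/
def EscapesUp (F : ℂ → ℂ) : Prop :=
  ∀ ε ∈ Ioo (0 : ℝ) 1, ∃ (w : ℂ) (n : ℕ), w.im ∈ Ico 0 ε ∧ 1 ≤ ((push F ε)^[n] w).im

namespace StripMap

variable {F : ℂ → ℂ} {ε : ℝ}

theorem continuous_push (h : StripMap F) : Continuous (push F ε) :=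
  h.continuous.add continuous_const

theorem injective_push (h : StripMap F) : Function.Injective (push F ε) :=
  (add_left_injective _).comp h.injective

theorem im_iterate_push_nonneg (h : StripMap F) (hε : 0 ≤ ε) (n : ℕ) {z : ℂ} (hz : 0 ≤ z.im) :
    0 ≤ ((push F ε)^[n] z).im := by
  induction n with
  | zero => exact hz
  | succ n ih =>
    rw [Function.iterate_succ_apply', push_im]
    exact add_nonneg (h.im_nonneg ih) hε

theorem le_im_iterate_push (h : StripMap F) (hε : 0 ≤ ε) {n : ℕ} (hn : 1 ≤ n) {z : ℂ}
    (hz : 0 ≤ z.im) : ε ≤ ((push F ε)^[n] z).im := by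
  obtain ⟨n, rfl⟩ := Nat.exists_eq_add_of_le' hn
  rw [Function.iterate_succ_apply', push_im]
  exact le_add_of_nonneg_left (h.im_nonneg (h.im_iterate_push_nonneg hε n hz))

theorem im_lineMap_push (h : StripMap F) (x s : ℝ) :
    (AffineMap.lineMap (x : ℂ) (push F ε x) s).im = s * ε := by
  simp [AffineMap.lineMap_apply_module', h.im_ofReal]

theorem im_orbitArc_push_nonneg (h : StripMap F) (hε : 0 ≤ ε) (x t : ℝ) :
    0 ≤ (orbitArc (push F ε) x t).im := by
  refine h.im_iterate_push_nonneg hε _ ?_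
  rw [h.im_lineMap_push]
  exact mul_nonneg (Int.fract_nonneg t) hε

theorem injOn_orbitArc_push (h : StripMap F) (hε : 0 < ε) (x : ℝ) :
    InjOn (orbitArc (push F ε) x) (Ici 0) := by
  refine injOn_orbitArc h.injective_push fun n hn r hr s hs heq => ?_
  have hlow := h.le_im_iterate_push hε.le hn (z := AffineMap.lineMap (x : ℂ) (push F ε x) r)
    (by rw [h.im_lineMap_push]; exact mul_nonneg hr.1 hε.le)
  rw [heq, h.im_lineMap_push] at hlow
  nlinarith [hs.2]

theorem exists_orbitArc_push_eq (h : StripMap F) {w : ℂ} (hw : w.im ∈ Ico 0 ε) :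
    ∃ x : ℝ, orbitArc (push F ε) x (w.im / ε) = w := by
  have hε : 0 < ε := hw.1.trans_lt hw.2
  have hs : w.im / ε ∈ Ico (0 : ℝ) 1 := ⟨div_nonneg hw.1 hε.le, (div_lt_one hε).2 hw.2⟩
  obtain ⟨x, hx⟩ := surjective_lineMap_apply h.bottomLift h.continuous_bottomLift
    (Ico_subset_Icc_self hs) w.re
  refine ⟨x, ?_⟩
  rw [orbitArc_of_mem_Ico hs]
  refine Complex.ext ?_ (by rw [h.im_lineMap_push, div_mul_cancel₀ _ hε.ne'])
  rw [← hx]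
  simp [AffineMap.lineMap_apply_module', bottomLift]

theorem exists_orbitArc_push_highest (h : StripMap F) (hε : ε ∈ Ioo (0 : ℝ) 1) {w : ℂ} {n : ℕ}
    (hw : w.im ∈ Ico 0 ε) (hwn : 1 ≤ ((push F ε)^[n] w).im) :
    ∃ x T : ℝ, 0 ≤ T ∧ 1 ≤ (orbitArc (push F ε) x T).im ∧
      ∀ t ∈ Icc 0 (T + 1), (orbitArc (push F ε) x t).im ≤ (orbitArc (push F ε) x (T + 1)).im := by
  obtain ⟨x, hx⟩ := h.exists_orbitArc_push_eq hw
  have hs : 0 ≤ w.im / ε := div_nonneg hw.1 hε.1.le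
  have hend : 1 + ε ≤ (orbitArc (push F ε) x (w.im / ε + (n + 1 : ℕ))).im := by
    rw [orbitArc_add_natCast hs, hx, Function.iterate_succ_apply', push_im, h.im_of_one_le hwn]
    gcongr
  obtain ⟨τ, hτ, hmax⟩ := isCompact_Icc.exists_isMaxOn (f := fun t => (orbitArc (push F ε) x t).im)
    (nonempty_Icc.2 (show 0 ≤ w.im / ε + (n + 1 : ℕ) by positivity))
    (continuous_im.comp_continuousOn
      ((continuousOn_orbitArc h.continuous_push (x : ℂ)).mono Icc_subset_Ici_self))
  have hτim : 1 + ε ≤ (orbitArc (push F ε) x τ).im :=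
    hend.trans (hmax (right_mem_Icc.2 (by positivity)))
  have hτ1 : 1 ≤ τ := by
    by_contra! hlt
    rw [orbitArc_of_mem_Ico ⟨hτ.1, hlt⟩, h.im_lineMap_push] at hτim
    nlinarith [hε.1]
  refine ⟨x, τ - 1, sub_nonneg.2 hτ1, ?_, fun t ht => ?_⟩
  · by_contra! hlt
    rw [← sub_add_cancel τ 1, orbitArc_add_one (sub_nonneg.2 hτ1), push_im] at hτim
    linarith [h.im_lt_one hlt]
  · rw [sub_add_cancel] at ht ⊢
    exact hmax ⟨ht.1, ht.2.trans hτ.2⟩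

end StripMap

/-! ### The Poincaré–Birkhoff theorem -/

theorem one_add_ofReal_mul_I_div_mem_slitPlane {u : ℂ} {ε : ℝ} (hε : 0 ≤ ε) (hu : ε < ‖u‖) :
    1 + ε * I / u ∈ slitPlane := by
  refine mem_slitPlane_of_norm_lt_one ?_
  rw [norm_div, norm_mul, norm_I, mul_one, norm_real, Real.norm_of_nonneg hε]
  exact (div_lt_one (hε.trans_lt hu)).2 hu

theorem log_add_ofReal_mul_I {u : ℂ} (him : 0 ≤ u.im) {ε : ℝ} (hε : 0 ≤ ε) (hu : ε < ‖u‖) :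
    log (u + ε * I) = log u + log (1 + ε * I / u) := by
  have hu0 : u ≠ 0 := norm_pos_iff.1 (hε.trans_lt hu)
  have hslit : ∀ τ ∈ Icc 0 ε, 1 + τ * I / u ∈ slitPlane := fun τ hτ =>
    one_add_ofReal_mul_I_div_mem_slitPlane hτ.1 (hτ.2.trans_lt hu)
  have hexp : ∀ τ ∈ Icc 0 ε, exp (log u + log (1 + τ * I / u)) = u + τ * I := fun τ hτ => by
    rw [exp_add, exp_log hu0, exp_log (slitPlane_ne_zero (hslit τ hτ))]
    field_simp
  have h := sub_log_exp_eq_sub_log_exp (L := fun τ : ℝ => log u + log (1 + τ * I / u))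
    isPreconnected_Icc (continuousOn_const.add (ContinuousOn.clog (by fun_prop) hslit))
    (fun τ hτ => by rw [hexp τ hτ]; simpa using add_nonneg him hτ.1)
    (left_mem_Icc.2 hε) (right_mem_Icc.2 hε)
  rw [hexp 0 (left_mem_Icc.2 hε), hexp ε (right_mem_Icc.2 hε)] at h
  simp only [ofReal_zero, zero_mul, zero_div, add_zero, log_one, sub_self] at h
  exact (sub_eq_zero.1 h.symm).symm

theorem neg_iff_neg_of_log_sub_log_neg_eq {a b : ℝ} (ha : a ≠ 0) (hb : b ≠ 0)
    (h : log a - log (-a) = log b - log (-b)) : a < 0 ↔ b < 0 := by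
  have key {c : ℝ} (hc : c ≠ 0) : c < 0 ↔ 0 < (log c - log (-c)).im := by
    rw [sub_im, log_im, log_im, ← ofReal_neg]
    rcases hc.lt_or_gt with h | h
    · rw [arg_ofReal_of_neg h, arg_ofReal_of_nonneg (by linarith)]
      simp [h, Real.pi_pos]
    · rw [arg_ofReal_of_nonneg h.le, arg_ofReal_of_neg (by linarith)]
      simp [h.not_gt, Real.pi_pos.not_gt]
  rw [key ha, key hb, h]

namespace StripMap

variable {F : ℂ → ℂ} {L : ℂ → ℂ}

theorem exists_log_push (h : StripMap F) {ε : ℝ} (hε : 0 ≤ ε) (hεF : ∀ z, ε < ‖F z - z‖)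
    (hL : Continuous L) (hexp : ∀ z, exp (L z) = F z - z) :
    ∃ ℓ : ℂ → ℂ, Continuous ℓ ∧ (∀ z, exp (ℓ z) = push F ε z - z) ∧
      ∀ z, 0 ≤ (F z - z).im → ℓ z - log (push F ε z - z) = L z - log (F z - z) := by
  have hslit (z : ℂ) := one_add_ofReal_mul_I_div_mem_slitPlane hε (hεF z)
  have hne (z : ℂ) : F z - z ≠ 0 := norm_pos_iff.1 (hε.trans_lt (hεF z))
  refine ⟨fun z => L z + log (1 + ε * I / (F z - z)), ?_, fun z => ?_, fun z hz => ?_⟩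
  · exact hL.add <| Continuous.clog
      (continuous_const.add (continuous_const.div (h.continuous.sub continuous_id) hne)) hslit
  · rw [exp_add, hexp, exp_log (slitPlane_ne_zero (hslit z)), push]
    field_simp [hne z]
    ring
  · rw [push, add_sub_right_comm (F z), log_add_ofReal_mul_I hz hε (hεF z),
      add_sub_add_right_eq_sub]

theorem sub_log_displacement_eq_of_escapesUp (h : StripMap F) (hfix : ∀ z ∈ strip, F z ≠ z)
    (hesc : EscapesUp F) (hL : Continuous L) (hexp : ∀ z, exp (L z) = F z - z) :
    ∃ (x : ℝ) (w : ℂ), 1 ≤ w.im ∧ L w - log (F w - w) = L x - log (F x - x) := by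
  obtain ⟨δ, hδ, hδF⟩ := h.exists_pos_le_norm_sub hfix
  obtain ⟨ε, hε0, hε⟩ := exists_between (lt_min hδ one_pos)
  have hε1 : ε ∈ Ioo (0 : ℝ) 1 := ⟨hε0, hε.trans_le (min_le_right _ _)⟩
  obtain ⟨ℓ, hℓ, hℓexp, hℓlog⟩ := h.exists_log_push hε0.le
    (fun z => (hε.trans_le (min_le_left _ _)).trans_le (hδF z)) hL hexp
  obtain ⟨w, n, hw, hwn⟩ := hesc ε hε1
  obtain ⟨x, T, hT, htop, hhigh⟩ := h.exists_orbitArc_push_highest hε1 hw hwn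
  have hΓ : ContinuousOn (orbitArc (push F ε) x) (Ici 0) :=
    continuousOn_orbitArc h.continuous_push _
  have turn := sub_log_chord_eq_of_lowest_of_highest (ℓ := fun s => ℓ (orbitArc (push F ε) x s)) hT
    (hΓ.mono Icc_subset_Ici_self) ((h.injOn_orbitArc_push hε0 x).mono Icc_subset_Ici_self)
    (fun t _ => by simpa using h.im_orbitArc_push_nonneg hε0.le x t) hhigh
    (hℓ.comp_continuousOn (hΓ.mono Icc_subset_Ici_self))
    (fun s hs => by rw [hℓexp, orbitArc_add_one hs.1])
  rw [orbitArc_add_one hT, orbitArc_zero, orbitArc_one,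
    hℓlog _ (by rw [sub_im, h.im_of_one_le htop, sub_self]),
    hℓlog _ (by rw [sub_im, h.im_ofReal, ofReal_im, sub_self])] at turn
  exact ⟨x, _, htop, turn⟩

theorem sub_log_displacement_top_eq_bottom (h : StripMap F) (hfix : ∀ z ∈ strip, F z ≠ z)
    (hesc : EscapesUp F) (hL : Continuous L) (hexp : ∀ z, exp (L z) = F z - z) (x y : ℝ) :
    L (y + I) - log (F (y + I) - (y + I)) = L x - log (F x - x) := by
  have along_boundary {S : Set ℂ} (hS : Convex ℝ S) (him : ∀ z ∈ S, (F z).im = z.im) {a b : ℂ}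
      (ha : a ∈ S) (hb : b ∈ S) : L a - log (F a - a) = L b - log (F b - b) := by
    simp only [← hexp]
    exact sub_log_exp_eq_sub_log_exp hS.isPreconnected hL.continuousOn
      (fun z hz => by rw [hexp, sub_im, him z hz, sub_self]) ha hb
  obtain ⟨x₀, w, hw, heq⟩ := h.sub_log_displacement_eq_of_escapesUp hfix hesc hL hexp
  have top := along_boundary (convex_halfSpace_im_ge 1) (fun z hz => h.im_of_one_le hz)
    (a := y + I) (b := w) (by simp) hw
  have bottom := along_boundary (convex_halfSpace_im_le 0) (fun z hz => h.im_of_nonpos hz)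
    (a := x) (b := x₀) (by simp) (by simp)
  rw [top, heq, bottom]

theorem exists_log_displacement (h : StripMap F) (hfix : ∀ z ∈ strip, F z ≠ z) :
    ∃ L : ℂ → ℂ, Continuous L ∧ ∀ z, exp (L z) = F z - z := by
  obtain ⟨δ, hδ, hδF⟩ := h.exists_pos_le_norm_sub hfix
  obtain ⟨L, hL, hexp⟩ := exists_continuousOn_log (convex_univ (𝕜 := ℝ)) (g := fun z => F z - z)
    (h.continuous.sub continuous_id).continuousOn fun z _ => norm_pos_iff.1 (hδ.trans_le (hδF z))
  exact ⟨L, continuousOn_univ.1 hL, fun z => hexp z trivial⟩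

theorem displacement_top_neg_iff_bottom (h : StripMap F) (hfix : ∀ z ∈ strip, F z ≠ z)
    (hup : EscapesUp F) (hdown : EscapesUp (_root_.halfTurnConj F)) (x y : ℝ) :
    (F (y + I)).re < y ↔ (F x).re < x := by
  have hmem (z : ℂ) : I - z ∈ strip ↔ z ∈ strip := by
    simp only [mem_strip, sub_im, I_im, sub_nonneg, sub_le_self_iff, and_comm]
  obtain ⟨L, hL, hexp⟩ := h.exists_log_displacement hfix
  have turn := h.sub_log_displacement_top_eq_bottom hfix hup hL hexp x y
  have turn' := h.halfTurnConj.sub_log_displacement_top_eq_bottom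
    (L := fun z => L (I - z) + Real.pi * I)
    (fun z hz heq => hfix (I - z) ((hmem z).2 hz) (by
      rw [_root_.halfTurnConj] at heq; linear_combination -heq))
    hdown (by fun_prop) (fun z => by
      rw [exp_add, exp_pi_mul_I, hexp, _root_.halfTurnConj]; ring) (-y) (-x)
  have hbot : F x - x = ((F x).re - x : ℝ) := by rw [ofReal_sub, ← h.map_ofReal]
  have htop : F (y + I) - (y + I) = ((F (y + I)).re - y : ℝ) := by
    rw [h.map_ofReal_add_I, ofReal_sub]; simp
  have bot_arg : I - (((-x : ℝ) : ℂ) + I) = x := by push_cast; ring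
  have top_arg : I - ((-y : ℝ) : ℂ) = y + I := by push_cast; ring
  have hneg (z : ℂ) : _root_.halfTurnConj F z - z = -(F (I - z) - (I - z)) := by
    rw [_root_.halfTurnConj]; ring
  rw [hneg, hneg, bot_arg, top_arg, hbot, htop] at turn'
  rw [hbot, htop] at turn
  rw [← sub_neg, ← sub_neg (a := (F x).re)]
  refine neg_iff_neg_of_log_sub_log_neg_eq ?_ ?_ (by linear_combination -turn - turn')
  · rw [← ofReal_ne_zero, ← htop]
    exact sub_ne_zero.2 (hfix _ (by simp [mem_strip]))
  · rw [← ofReal_ne_zero, ← hbot]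
    exact sub_ne_zero.2 (hfix _ (by simp [mem_strip]))

end StripMap

/-! ### Periodic points of strip maps -/

namespace StripMap

variable {F : ℂ → ℂ} {x₀ : ℝ}

theorem iterate_add_intCast_ne (h : StripMap F) (hx₀ : F x₀ = x₀) {m : ℤ} (hm : m ≠ 0) (n : ℕ)
    (x : ℝ) : F^[n] x + m ≠ x := by
  intro heq
  have hx : (h.bottomLift ^ n) x = x + (-m : ℤ) := ofReal_injective <| by
    rw [h.ofReal_bottomLift_pow]
    push_cast
    linear_combination heq
  have hx₀' : (h.bottomLift ^ n) x₀ = x₀ + (0 : ℤ) := ofReal_injective <| by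
    rw [h.ofReal_bottomLift_pow, Function.iterate_fixed hx₀, Int.cast_zero, add_zero]
  have hτ := CircleDeg1Lift.translationNumber_of_eq_add_int _ hx
  rw [CircleDeg1Lift.translationNumber_of_eq_add_int _ hx₀'] at hτ
  exact hm (by simpa using (Int.cast_injective hτ).symm)

theorem abs_topLift_pow_le (h : StripMap F) (hx₀ : F x₀ = x₀) {n : ℕ}
    (hfix : ∀ m : ℤ, ∀ z : ℂ, z.im ∈ Ioc (0 : ℝ) 1 → F^[n] z + m ≠ z)
    (hup : ∀ m : ℤ, EscapesUp fun z => F^[n] z + m)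
    (hdown : ∀ m : ℤ, EscapesUp (_root_.halfTurnConj fun z => F^[n] z + m)) :
    |(h.topLift ^ n) 0| ≤ 1 := by
  have hfix' {m : ℤ} (hm : m ≠ 0) (z : ℂ) (hz : z ∈ strip) : F^[n] z + m ≠ z := by
    rcases hz.1.eq_or_lt with h0 | h0
    · rw [show z = z.re from Complex.ext rfl h0.symm]
      exact h.iterate_add_intCast_ne hx₀ hm n z.re
    · exact hfix m z ⟨h0, hz.2⟩
  have twist {m : ℤ} (hm : m ≠ 0) : (h.topLift ^ n) 0 + m < 0 ↔ m < 0 := by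
    have := ((h.iterate n).add_intCast m).displacement_top_neg_iff_bottom (hfix' hm) (hup m)
      (hdown m) x₀ 0
    simp only [← h.ofReal_topLift_pow, Function.iterate_fixed hx₀] at this
    simpa using this
  have hlt := (twist (m := -1) (by decide)).2 (by decide)
  have hge := mt (twist (m := 1) (by decide)).1 (by decide)
  push_cast at hlt hge
  exact abs_le.2 ⟨by linarith, by linarith⟩

theorem exists_iterate_eq_add_intCast (h : StripMap F) (hx₀ : F x₀ = x₀)
    (hup : ∀ n, ∀ m : ℤ, EscapesUp fun z => F^[n] z + m)
    (hdown : ∀ n, ∀ m : ℤ, EscapesUp (_root_.halfTurnConj fun z => F^[n] z + m)) :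
    ∃ z : ℂ, z.im ∈ Ioc (0 : ℝ) 1 ∧ ∃ n ≥ 1, ∃ m : ℤ, F^[n] z = z + m := by
  by_contra! hno
  have hbdd (n : ℕ) : |(h.topLift ^ n) 0| ≤ 1 := by
    rcases n.eq_zero_or_pos with rfl | hn
    · simp
    refine h.abs_topLift_pow_le hx₀ (fun m z hz heq => hno z hz n hn (-m) ?_) (hup n) (hdown n)
    push_cast
    linear_combination heq
  have hτ : CircleDeg1Lift.translationNumber h.topLift = (0 : ℤ) := by
    rw [CircleDeg1Lift.translationNumber_eq_of_dist_bounded (g := 1) 1 (by simpa using hbdd),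
      CircleDeg1Lift.translationNumber_one, Int.cast_zero]
  obtain ⟨x, hx⟩ := (h.topLift.translationNumber_eq_int_iff h.continuous_topLift).1 hτ
  refine hno (x + I) (by simp) 1 le_rfl 0 ?_
  rw [Function.iterate_one, ← h.ofReal_topLift, hx]
  simp

end StripMap

/-! ### Escaping orbits -/

section Area

open MeasureTheory

theorem exists_iterate_notMem {α : Type*} [MeasurableSpace α] {μ : Measure α} {U E₀ : Set α}
    {g : α → α} (hU : μ U ≠ ⊤) (hE₀ : MeasurableSet E₀) (hpos : μ E₀ ≠ 0)
    (himg : ∀ E ⊆ U, MeasurableSet E → MeasurableSet (g '' E) ∧ μ (g '' E) = μ E)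
    (hdisj : ∀ z ∈ U, g z ∉ E₀) : ∃ w ∈ E₀, ∃ n, g^[n] w ∉ U := by
  by_contra! hstay
  have hmeas (n : ℕ) : MeasurableSet (g^[n] '' E₀) := by
    induction n with
    | zero => simpa using hE₀
    | succ n ih =>
      rw [Function.iterate_succ', image_comp]
      exact (himg _ (image_subset_iff.2 fun w hw => hstay w hw n) ih).1
  set V : Set α := ⋃ n, g^[n] '' E₀ with hV
  have hVU : V ⊆ U := iUnion_subset fun n => image_subset_iff.2 fun w hw => hstay w hw n
  have hsplit : V = E₀ ∪ g '' V := by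
    rw [hV, image_iUnion]
    simp only [← image_comp, ← Function.iterate_succ']
    rw [← union_iUnion_nat_succ fun n => g^[n] '' E₀, Function.iterate_zero, image_id]
  have hVdisj : Disjoint E₀ (g '' V) := disjoint_right.2 <| forall_mem_image.2
    fun z hz => hdisj z (hVU hz)
  have hμV : μ V = μ E₀ + μ V := by
    conv_lhs => rw [hsplit]
    rw [measure_union' hVdisj hE₀, (himg V hVU (.iUnion hmeas)).2]
  rw [← zero_add (μ V), ← add_assoc, add_zero,
    ENNReal.add_left_inj (measure_ne_top_of_subset hVU hU)] at hμV
  exact hpos hμV.symm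

theorem addHaar_image_eq_of_abs_det_eq_one {E : Type*} [NormedAddCommGroup E] [NormedSpace ℝ E]
    [FiniteDimensional ℝ E] [MeasurableSpace E] [BorelSpace E] (μ : Measure E)
    [μ.IsAddHaarMeasure] {s : Set E} (hs : MeasurableSet s) {g : E → E} {g' : E → E →L[ℝ] E}
    (hg : ∀ x ∈ s, HasFDerivWithinAt g (g' x) s x) (hinj : InjOn g s)
    (hdet : ∀ x ∈ s, |(g' x).det| = 1) : μ (g '' s) = μ s := by
  rw [← lintegral_abs_det_fderiv_eq_addHaar_image μ hs hg hinj, ← setLIntegral_one s]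
  exact setLIntegral_congr_fun hs fun x hx => by simp [hdet x hx]

end Area

theorem mem_disk {z : ℂ} : z ∈ Disk ↔ ‖z‖ ≤ 1 := mem_closedBall_zero_iff

theorem det_eq_re_mul_im_sub (A : ℂ →L[ℝ] ℂ) :
    A.det = (A 1).re * (A I).im - (A I).re * (A 1).im := by
  rw [ContinuousLinearMap.det, ← LinearMap.det_toMatrix basisOneI, Matrix.det_fin_two]
  simp [LinearMap.toMatrix_apply]

/-- The area-preserving radial map that increases the square of the modulus by `e`, where this is
possible. -/
noncomputable def radialPush (e : ℝ) (z : ℂ) : ℂ := √(1 + e / ‖z‖ ^ 2) • z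

/-- The open set on which `radialPush e` is a diffeomorphism onto its image. -/
def radialPushDomain (e : ℝ) : Set ℂ := {z | z ≠ 0 ∧ 0 < ‖z‖ ^ 2 + e}

section RadialPush

open MeasureTheory

variable {e : ℝ} {z : ℂ}

theorem one_add_div_norm_sq_pos (hz : z ∈ radialPushDomain e) : 0 < 1 + e / ‖z‖ ^ 2 := by
  have : ‖z‖ ≠ 0 := norm_ne_zero_iff.2 hz.1
  rw [one_add_div (by positivity)]
  exact div_pos hz.2 (by positivity)

theorem norm_radialPush_sq (hz : z ∈ radialPushDomain e) : ‖radialPush e z‖ ^ 2 = ‖z‖ ^ 2 + e := by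
  have : ‖z‖ ≠ 0 := norm_ne_zero_iff.2 hz.1
  rw [radialPush, norm_smul, mul_pow, Real.norm_eq_abs, sq_abs,
    Real.sq_sqrt (one_add_div_norm_sq_pos hz).le]
  field_simp

theorem injOn_radialPush (e : ℝ) : InjOn (radialPush e) (radialPushDomain e) := by
  intro z hz w hw hzw
  have hnorm : ‖z‖ ^ 2 = ‖w‖ ^ 2 := by
    linarith [norm_radialPush_sq hz, norm_radialPush_sq hw, congr_arg (‖·‖ ^ 2) hzw]
  rw [radialPush, radialPush, ← hnorm] at hzw
  exact smul_right_injective ℂ (Real.sqrt_pos.2 (one_add_div_norm_sq_pos hz)).ne' hzw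

theorem exists_hasFDerivAt_radialPush (hz : z ∈ radialPushDomain e) :
    ∃ A : ℂ →L[ℝ] ℂ, HasFDerivAt (radialPush e) A z ∧ A.det = 1 := by
  have hz0 : ‖z‖ ≠ 0 := norm_ne_zero_iff.2 hz.1
  set q := √(1 + e / ‖z‖ ^ 2) with hq
  have hq0 : 0 < q := Real.sqrt_pos.2 (one_add_div_norm_sq_pos hz)
  have hq2 : q ^ 2 = 1 + e / ‖z‖ ^ 2 := Real.sq_sqrt (one_add_div_norm_sq_pos hz).le
  obtain ⟨k, hk⟩ : ∃ k, k = -e / (‖z‖ ^ 2) ^ 2 / (2 * q) := ⟨_, rfl⟩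
  have hfactor : HasDerivAt (fun s => √(1 + e / s)) k (‖z‖ ^ 2) := by
    have := ((hasDerivAt_const _ e).div (hasDerivAt_id _) (pow_ne_zero 2 hz0)).const_add 1
    rw [hk]
    exact HasDerivAt.sqrt (by simpa using this) (one_add_div_norm_sq_pos hz).ne'
  have hderiv := (hfactor.comp_hasFDerivAt z (hasStrictFDerivAt_norm_sq z).hasFDerivAt).smul
    (hasFDerivAt_id z)
  refine ⟨_, hderiv, ?_⟩
  have hdet : q ^ 2 + 2 * q * k * ‖z‖ ^ 2 = 1 := by
    rw [hk, hq2]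
    field_simp
    ring
  rw [Complex.sq_norm, normSq_apply] at hdet
  rw [det_eq_re_mul_im_sub]
  simp [Complex.inner, ← hq]
  linear_combination hdet

theorem volume_radialPush_image {E : Set ℂ} (hE : E ⊆ radialPushDomain e) (hm : MeasurableSet E) :
    MeasurableSet (radialPush e '' E) ∧ volume (radialPush e '' E) = volume E := by
  choose! A hA hdet using fun z (hz : z ∈ E) => exists_hasFDerivAt_radialPush (hE hz)
  have hinj := (injOn_radialPush e).mono hE
  exact ⟨hm.image_of_continuousOn_injOn
      (fun z hz => (hA z hz).continuousAt.continuousWithinAt) hinj,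
    addHaar_image_eq_of_abs_det_eq_one volume hm (fun z hz => (hA z hz).hasFDerivWithinAt) hinj
      fun z hz => by rw [hdet z hz, abs_one]⟩

end RadialPush

/-! ### Lifts of area-preserving disk maps -/

@[simp]
theorem fourierChar_intCast (m : ℤ) : 𝐞 (m : ℝ) = 1 := by
  rw [Real.fourierChar_apply', mul_comm, Circle.exp_int_mul_two_pi]

theorem fourierChar_one : 𝐞 (1 : ℝ) = 1 := by
  exact_mod_cast fourierChar_intCast 1

theorem exists_eq_add_intCast_of_fourierChar_eq {x y : ℝ} (h : 𝐞 x = 𝐞 y) :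
    ∃ m : ℤ, x = y + m := by
  rw [Real.fourierChar_apply', Real.fourierChar_apply'] at h
  obtain ⟨m, hm⟩ := Circle.exp_eq_exp.1 h
  exact ⟨m, mul_left_cancel₀ Real.two_pi_pos.ne' (by linarith)⟩

/-- Polar coordinates with angle `2π re z` and squared modulus `im z`, which up to a factor turn
the area of the disk into Lebesgue measure on the strip. -/
noncomputable def polarMap (z : ℂ) : ℂ := √z.im • (𝐞 z.re : ℂ)

section PolarMap

variable {z : ℂ} {e : ℝ}

@[fun_prop]
theorem continuous_polarMap : Continuous polarMap := by
  unfold polarMap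
  fun_prop

theorem norm_polarMap (z : ℂ) : ‖polarMap z‖ = √z.im := by
  rw [polarMap, norm_smul, Circle.norm_coe, mul_one, Real.norm_of_nonneg (Real.sqrt_nonneg _)]

theorem norm_polarMap_sq (hz : 0 ≤ z.im) : ‖polarMap z‖ ^ 2 = z.im := by
  rw [norm_polarMap, Real.sq_sqrt hz]

theorem polarMap_ne_zero (hz : 0 < z.im) : polarMap z ≠ 0 := by
  rw [← norm_pos_iff, norm_polarMap]
  exact Real.sqrt_pos.2 hz

theorem polarMap_of_im_nonpos (hz : z.im ≤ 0) : polarMap z = 0 := by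
  rw [polarMap, Real.sqrt_eq_zero_of_nonpos hz, zero_smul]

theorem polarMap_mem_disk (hz : z.im ≤ 1) : polarMap z ∈ Disk := by
  rwa [mem_disk, norm_polarMap, Real.sqrt_le_one]

theorem polarMap_add_intCast (z : ℂ) (m : ℤ) : polarMap (z + m) = polarMap z := by
  rw [polarMap, polarMap, add_re, add_im, intCast_re, intCast_im, add_zero,
    AddChar.map_add_eq_mul, fourierChar_intCast, mul_one]

theorem exists_polarMap_eq (p : ℂ) : ∃ z : ℂ, z.im = ‖p‖ ^ 2 ∧ polarMap z = p := by
  refine ⟨⟨arg p / (2 * Real.pi), ‖p‖ ^ 2⟩, rfl, ?_⟩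
  rw [polarMap, Real.sqrt_sq (norm_nonneg p), Real.fourierChar_apply', Circle.coe_exp,
    mul_div_cancel₀ _ Real.two_pi_pos.ne', real_smul, norm_mul_exp_arg_mul_I]

theorem polarMap_add_ofReal_mul_I (hz : 0 < z.im) (he : 0 ≤ z.im + e) :
    polarMap (z + e * I) = radialPush e (polarMap z) := by
  have hfactor : 0 ≤ 1 + e / z.im := by
    rw [one_add_div hz.ne']
    positivity
  rw [radialPush, norm_polarMap_sq hz.le, polarMap, polarMap, smul_smul, ← Real.sqrt_mul hfactor,
    add_mul, div_mul_cancel₀ _ hz.ne', one_mul]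
  simp

end PolarMap

/-- Area-preserving injective self-maps of the closed disk that preserve its interior and its
boundary and fix the origin. -/
structure AreaPreservingDiskMap (f : ℂ → ℂ) : Prop where
  continuousOn : ContinuousOn f Disk
  injOn : InjOn f Disk
  mapsTo_ball : MapsTo f (ball 0 1) (ball 0 1)
  mapsTo_sphere : MapsTo f (sphere 0 1) (sphere 0 1)
  map_zero : f 0 = 0
  volume_image : ∀ E ⊆ Disk, MeasurableSet E →
    MeasureTheory.volume (f '' E) = MeasureTheory.volume E

namespace AreaPreservingDiskMap

variable {f g : ℂ → ℂ}

theorem mapsTo_disk (hf : AreaPreservingDiskMap f) : MapsTo f Disk Disk := by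
  rw [Disk, ← ball_union_sphere]
  exact hf.mapsTo_ball.union_union hf.mapsTo_sphere

theorem map_ne_zero (hf : AreaPreservingDiskMap f) {z : ℂ} (hz : z ∈ Disk) (h0 : z ≠ 0) :
    f z ≠ 0 := fun h =>
  h0 (hf.injOn hz (mem_disk.2 (by simp)) (h.trans hf.map_zero.symm))

theorem measurableSet_image (hf : AreaPreservingDiskMap f) {E : Set ℂ} (hE : E ⊆ Disk)
    (hm : MeasurableSet E) : MeasurableSet (f '' E) :=
  hm.image_of_continuousOn_injOn (hf.continuousOn.mono hE) (hf.injOn.mono hE)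

protected theorem id : AreaPreservingDiskMap id where
  continuousOn := continuousOn_id
  injOn := injOn_id _
  mapsTo_ball := mapsTo_id _
  mapsTo_sphere := mapsTo_id _
  map_zero := rfl
  volume_image _ _ _ := by rw [image_id]

theorem comp (hf : AreaPreservingDiskMap f) (hg : AreaPreservingDiskMap g) :
    AreaPreservingDiskMap (f ∘ g) where
  continuousOn := hf.continuousOn.comp hg.continuousOn hg.mapsTo_disk
  injOn := hf.injOn.comp hg.injOn hg.mapsTo_disk
  mapsTo_ball := hf.mapsTo_ball.comp hg.mapsTo_ball
  mapsTo_sphere := hf.mapsTo_sphere.comp hg.mapsTo_sphere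
  map_zero := by rw [Function.comp_apply, hg.map_zero, hf.map_zero]
  volume_image E hE hm := by
    rw [image_comp, hf.volume_image _ (image_subset_iff.2 fun z hz => hg.mapsTo_disk (hE hz))
      (hg.measurableSet_image hE hm), hg.volume_image E hE hm]

theorem iterate (hf : AreaPreservingDiskMap f) (n : ℕ) : AreaPreservingDiskMap f^[n] := by
  induction n with
  | zero => exact .id
  | succ n ih => exact ih.comp hf

theorem exists_iterate_radialPush_notMem (hf : AreaPreservingDiskMap f) {a b e : ℝ} (ha : 0 ≤ a)
    (hab : a < b) (hdisj : ∀ t ∈ Ioc (0 : ℝ) 1, t + e ∉ Ioo a b) :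
    ∃ p, ‖p‖ ^ 2 ∈ Ioo a b ∧ ∃ n, (radialPush e ∘ f)^[n] p ∉ Disk ∩ f ⁻¹' radialPushDomain e := by
  set U : Set ℂ := Disk ∩ f ⁻¹' radialPushDomain e
  have hopen : IsOpen {p : ℂ | ‖p‖ ^ 2 ∈ Ioo a b} := isOpen_Ioo.preimage (by fun_prop)
  refine exists_iterate_notMem (μ := MeasureTheory.volume)
    (MeasureTheory.measure_ne_top_of_subset inter_subset_left
      MeasureTheory.measure_closedBall_lt_top.ne)
    hopen.measurableSet (hopen.measure_ne_zero _ ⟨(√((a + b) / 2) : ℝ), ?_⟩)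
    (fun E hE hm => ?_) fun z hz hmem => ?_
  · rw [mem_ofPred_eq, norm_real, Real.norm_eq_abs, sq_abs, Real.sq_sqrt (by linarith)]
    constructor <;> linarith
  · rw [image_comp, ← hf.volume_image E (fun z hz => (hE hz).1) hm]
    exact volume_radialPush_image (image_subset_iff.2 fun z hz => (hE hz).2)
      (hf.measurableSet_image (fun z hz => (hE hz).1) hm)
  · have hfz : ‖f z‖ ≤ 1 := mem_disk.1 (hf.mapsTo_disk hz.1)
    have hfz0 : 0 < ‖f z‖ := norm_pos_iff.2 hz.2.1
    refine hdisj (‖f z‖ ^ 2) ⟨by positivity, pow_le_one₀ hfz0.le hfz⟩ ?_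
    rw [← norm_radialPush_sq hz.2]
    exact hmem

end AreaPreservingDiskMap

/-- `F` lifts the disk map `f` to the closed strip, in which the origin is blown up to the bottom
line. -/
structure IsLift (f F : ℂ → ℂ) : Prop where
  stripMap : StripMap F
  semiconj : ∀ z : ℂ, z.im ∈ Ioc (0 : ℝ) 1 → polarMap (F z) = f (polarMap z)

namespace IsLift

variable {f g F G : ℂ → ℂ}

protected theorem id : IsLift id id := ⟨.id, fun _ _ => rfl⟩

theorem im_map_mem_Ioc (hF : IsLift f F) {z : ℂ} (hz : z.im ∈ Ioc (0 : ℝ) 1) :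
    (F z).im ∈ Ioc (0 : ℝ) 1 := by
  rcases hz.2.lt_or_eq with h1 | h1
  · exact Ioo_subset_Ioc_self (hF.stripMap.im_mem_Ioo z ⟨hz.1, h1⟩)
  · rwa [hF.stripMap.im_of_one_le h1.ge]

theorem comp (hF : IsLift f F) (hG : IsLift g G) : IsLift (f ∘ g) (F ∘ G) where
  stripMap := hF.stripMap.comp hG.stripMap
  semiconj z hz := by
    simp only [Function.comp_apply, hF.semiconj _ (hG.im_map_mem_Ioc hz), hG.semiconj z hz]

theorem iterate (hF : IsLift f F) (n : ℕ) : IsLift f^[n] F^[n] := by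
  induction n with
  | zero => exact .id
  | succ n ih => exact ih.comp hF

theorem add_intCast (hF : IsLift f F) (m : ℤ) : IsLift f fun z => F z + m where
  stripMap := hF.stripMap.add_intCast m
  semiconj z hz := by
    rw [← hF.semiconj z hz, polarMap_add_intCast]

theorem polarMap_push (hF : IsLift f F) {e : ℝ} {z : ℂ} (hz : z.im ∈ Ioc (0 : ℝ) 1)
    (hpush : 0 < (push F e z).im) :
    f (polarMap z) ∈ radialPushDomain e ∧
      polarMap (push F e z) = radialPush e (f (polarMap z)) := by
  have hFz := (hF.im_map_mem_Ioc hz).1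
  rw [push_im] at hpush
  rw [← hF.semiconj z hz]
  refine ⟨⟨polarMap_ne_zero hFz, ?_⟩, polarMap_add_ofReal_mul_I hFz hpush.le⟩
  rwa [norm_polarMap_sq hFz.le]

theorem exists_iterate_push_notMem (hf : AreaPreservingDiskMap f) (hF : IsLift f F) {a b e : ℝ}
    (ha : 0 ≤ a) (hab : a < b) (hdisj : ∀ t ∈ Ioc (0 : ℝ) 1, t + e ∉ Ioo a b) :
    ∃ w : ℂ, w.im ∈ Ioo a b ∧ ∃ n, ((push F e)^[n] w).im ∉ Ioc (0 : ℝ) 1 := by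
  obtain ⟨p, hp, n, hn⟩ := hf.exists_iterate_radialPush_notMem ha hab hdisj
  obtain ⟨w, hw, rfl⟩ := exists_polarMap_eq p
  refine ⟨w, hw ▸ hp, ?_⟩
  by_contra! hstay
  have hstep (k : ℕ) := hF.polarMap_push (hstay k)
    (by simpa only [Function.iterate_succ_apply'] using (hstay (k + 1)).1)
  have hiter : polarMap ((push F e)^[n] w) = (radialPush e ∘ f)^[n] (polarMap w) := by
    clear hn
    induction n with
    | zero => rfl
    | succ n ih =>
      rw [Function.iterate_succ_apply', (hstep n).2, ih, Function.iterate_succ_apply',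
        Function.comp_apply]
  rw [← hiter] at hn
  exact hn ⟨polarMap_mem_disk (hstay n).2, (hstep n).1⟩

theorem escapesUp (hf : AreaPreservingDiskMap f) (hF : IsLift f F) : EscapesUp F := by
  intro ε hε
  obtain ⟨w, hw, n, hn⟩ := hF.exists_iterate_push_notMem hf le_rfl hε.1
    (e := ε) fun t ht h => by linarith [ht.1, h.2]
  refine ⟨w, n, Ioo_subset_Ico_self hw, ?_⟩
  by_contra! hlt
  refine hn ⟨?_, hlt.le⟩
  rcases n.eq_zero_or_pos with rfl | hpos
  · exact hw.1
  · exact hε.1.trans_le (hF.stripMap.le_im_iterate_push hε.1.le hpos hw.1.le)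

theorem escapesUp_halfTurnConj (hf : AreaPreservingDiskMap f) (hF : IsLift f F) :
    EscapesUp (halfTurnConj F) := by
  intro ε hε
  obtain ⟨w, hw, n, hn⟩ := hF.exists_iterate_push_notMem hf (sub_nonneg.2 hε.2.le)
    (sub_lt_self 1 hε.1) (e := -ε) fun t ht h => by linarith [ht.2, h.1]
  have hconj : (push (halfTurnConj F) ε)^[n] (I - w) = I - (push F (-ε))^[n] w :=
    (Function.Semiconj.iterate_right (f := fun z => I - z) (fun z => by
      simp [push, halfTurnConj]; ring) n w).symm
  have hnonneg := hF.stripMap.halfTurnConj.im_iterate_push_nonneg hε.1.le n (z := I - w)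
    (by simpa using hw.2.le)
  refine ⟨I - w, n, ⟨by simpa using hw.2.le, ?_⟩, ?_⟩
  · rw [sub_im, I_im]
    linarith [hw.1]
  · rw [hconj, sub_im, I_im] at hnonneg ⊢
    grind

end IsLift

/-! ### The blow-up of the origin -/

theorem injective_of_det_ne_zero {E : Type*} [NormedAddCommGroup E] [NormedSpace ℝ E]
    [FiniteDimensional ℝ E] {A : E →L[ℝ] E} (hA : A.det ≠ 0) : Function.Injective A :=
  (LinearMap.equivOfDetNeZero (A : E →ₗ[ℝ] E) hA).injective

theorem eq_of_norm_smul_eq_map {E F : Type*} [NormedAddCommGroup E] [NormedSpace ℝ E]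
    [NormedAddCommGroup F] [NormedSpace ℝ F] {A : E →L[ℝ] F} (hA : Function.Injective A) {u v : E}
    (huv : ‖u‖ = ‖v‖) {w : F} (hu : ‖A u‖ • w = A u) (hv : ‖A v‖ • w = A v) : u = v := by
  have hray : SameRay ℝ (A u) (A v) := by
    rw [← hu, ← hv]
    exact (SameRay.sameRay_nonneg_smul_left w (norm_nonneg _)).nonneg_smul_right (norm_nonneg _)
  exact (sameRay_iff_of_norm_eq huv).1
    ((Function.Injective.sameRay_map_iff (f := (A : E →ₗ[ℝ] F)) hA).1 hray)

theorem exists_div_mem_slitPlane {A : ℂ →L[ℝ] ℂ} (hdet : 0 < A.det) :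
    ∃ a : ℂ, a ≠ 0 ∧ ∀ u : ℂ, u ≠ 0 → A u / (a * u) ∈ slitPlane := by
  -- The conformal part `a` of `A` dominates its anticonformal part `b`.
  obtain ⟨a, ha⟩ : ∃ a, a = (A 1 - I * A I) / 2 := ⟨_, rfl⟩
  obtain ⟨b, hb⟩ : ∃ b, b = (A 1 + I * A I) / 2 := ⟨_, rfl⟩
  have hA (u : ℂ) : A u = a * u + b * (starRingEnd ℂ) u := by
    have hu : A u = u.re * A 1 + u.im * A I := by
      rw [← real_smul, ← real_smul, ← map_smul, ← map_smul, ← map_add]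
      simp
    rw [hu, ha, hb, re_eq_add_conj, im_eq_sub_conj]
    field_simp
    linear_combination (u - (starRingEnd ℂ) u) * A I * I_sq
  have hab : ‖b‖ < ‖a‖ := by
    rw [← sq_lt_sq₀ (norm_nonneg _) (norm_nonneg _), Complex.sq_norm, Complex.sq_norm, ← sub_pos]
    rw [det_eq_re_mul_im_sub] at hdet
    have : normSq a - normSq b = (A 1).re * (A I).im - (A I).re * (A 1).im := by
      simp [normSq_apply, ha, hb]
      ring
    rwa [this]
  have ha0 : a ≠ 0 := norm_pos_iff.1 ((norm_nonneg b).trans_lt hab)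
  refine ⟨a, ha0, fun u hu => ?_⟩
  rw [hA, add_div, div_self (mul_ne_zero ha0 hu)]
  apply mem_slitPlane_of_norm_lt_one
  rw [norm_div, norm_mul, norm_mul, RCLike.norm_conj, mul_div_mul_right _ _ (norm_ne_zero_iff.2 hu)]
  exact (div_lt_one (norm_pos_iff.2 ha0)).2 hab

theorem map_one_eq_map_zero_of_exp_eq {A : ℂ →L[ℝ] ℂ} (hdet : 0 < A.det) {L : ℝ → ℂ}
    (hL : Continuous L) (hexp : ∀ x, exp (L x) = A (𝐞 x) / 𝐞 x) : L 1 = L 0 := by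
  obtain ⟨a, ha, hslit⟩ := exists_div_mem_slitPlane hdet
  have hlog : Continuous fun x : ℝ => log (A (𝐞 x) / (a * 𝐞 x)) + log a := by
    have hne (x : ℝ) : a * 𝐞 x ≠ 0 := mul_ne_zero ha (Circle.coe_ne_zero _)
    have hquot : Continuous fun x : ℝ => A (𝐞 x) / (a * 𝐞 x) := by fun_prop (disch := exact hne _)
    exact (hquot.clog fun x => hslit _ (Circle.coe_ne_zero _)).add continuous_const
  have heq := sub_eq_sub_of_exp_eq_exp isPreconnected_univ hL.continuousOn hlog.continuousOn
    (fun x _ => by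
      rw [hexp, exp_add, exp_log (slitPlane_ne_zero (hslit _ (Circle.coe_ne_zero _))), exp_log ha]
      field) (mem_univ 1) (mem_univ 0)
  rw [fourierChar_one, AddChar.map_zero_eq_one] at heq
  exact sub_left_injective heq

theorem norm_smul_fourierChar_eq {w L : ℂ} {x : ℝ} (h : exp L = w / 𝐞 x) :
    ‖w‖ • (𝐞 (x + L.im / (2 * Real.pi)) : ℂ) = w := by
  have hw : w = exp L * 𝐞 x := by rw [h, div_mul_cancel₀ _ (Circle.coe_ne_zero _)]
  rw [AddChar.map_add_eq_mul, Circle.coe_mul, Real.fourierChar_apply (L.im / _),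
    mul_div_cancel₀ _ Real.two_pi_pos.ne', hw, norm_mul, Circle.norm_coe, mul_one, norm_exp,
    real_smul, ofReal_exp, mul_left_comm, ← exp_add, re_add_im, mul_comm]

theorem exists_continuous_angle {A : ℂ →L[ℝ] ℂ} (hdet : 0 < A.det) {N : ℂ → ℂ}
    (hN : ContinuousOn N strip) (h0 : ∀ z ∈ strip, N z ≠ 0) (hadd : ∀ z, N (z + 1) = N z)
    (hbot : ∀ x : ℝ, N x = A (𝐞 x)) :
    ∃ θ : ℂ → ℝ, Continuous θ ∧ (∀ z, θ (z + 1) = θ z + 1) ∧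
      ∀ z ∈ strip, ‖N z‖ • (𝐞 (θ z) : ℂ) = N z := by
  have hstrip : Convex ℝ strip := (convex_Icc 0 1).linear_preimage imLm
  have hcirc : Continuous fun z : ℂ => (𝐞 z.re : ℂ) := by fun_prop
  obtain ⟨L, hL, hexp⟩ := exists_continuousOn_log hstrip (g := fun z => N z / 𝐞 z.re)
    (hN.div hcirc.continuousOn fun z _ => Circle.coe_ne_zero _)
    fun z hz => div_ne_zero (h0 z hz) (Circle.coe_ne_zero _)
  have hadd_mem {z : ℂ} (hz : z ∈ strip) : z + 1 ∈ strip := by simpa [mem_strip] using hz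
  have hreal_mem (x : ℝ) : (x : ℂ) ∈ strip := by simp [mem_strip]
  have hbottom := map_one_eq_map_zero_of_exp_eq hdet (L := fun x : ℝ => L x)
    (hL.comp_continuous continuous_ofReal hreal_mem) fun x => by
      rw [hexp _ (hreal_mem x), hbot, ofReal_re]
  have hperiodic {z : ℂ} (hz : z ∈ strip) : L (z + 1) = L z := by
    have hconst := sub_eq_sub_of_exp_eq_exp hstrip.isPreconnected (L₁ := fun z => L (z + 1))
      (hL.comp (by fun_prop) fun z hz => hadd_mem hz) hL
      (fun z hz => by
        rw [hexp _ (hadd_mem hz), hexp z hz, hadd, add_re, one_re, AddChar.map_add_eq_mul,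
          fourierChar_one, mul_one]) hz (hreal_mem 0)
    rw [ofReal_zero, zero_add, ← ofReal_one, hbottom, ofReal_zero, sub_self] at hconst
    exact sub_eq_zero.1 (by simpa using hconst)
  have hLproj := hL.comp_continuous continuous_stripProj stripProj_mem
  refine ⟨fun z => z.re + (L (stripProj z)).im / (2 * Real.pi),
    continuous_re.add ((continuous_im.comp hLproj).div_const _), fun z => ?_, fun z hz => ?_⟩
  · dsimp only
    rw [stripProj_add_one, hperiodic (stripProj_mem z), add_re, one_re]
    ring
  · dsimp only
    rw [stripProj_of_mem hz]
    exact norm_smul_fourierChar_eq (hexp z hz)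

/-- The map `f`, read in polar coordinates and divided by the modulus of its argument; `A` stands
for the derivative of `f` at the origin, which it becomes on the bottom line of `strip`. -/
noncomputable def blowUp (f : ℂ → ℂ) (A : ℂ →L[ℝ] ℂ) (z : ℂ) : ℂ :=
  A (𝐞 z.re) + ‖polarMap z‖⁻¹ • (f (polarMap z) - A (polarMap z))

section BlowUp

variable {f : ℂ → ℂ} {A : ℂ →L[ℝ] ℂ} {z : ℂ}

theorem blowUp_of_im_nonpos (hz : z.im ≤ 0) : blowUp f A z = A (𝐞 z.re) := by
  rw [blowUp, polarMap_of_im_nonpos hz, norm_zero, inv_zero, zero_smul, add_zero]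

theorem sqrt_smul_blowUp (h0 : f 0 = 0) (z : ℂ) : √z.im • blowUp f A z = f (polarMap z) := by
  rcases le_or_gt z.im 0 with hz | hz
  · rw [polarMap_of_im_nonpos hz, Real.sqrt_eq_zero_of_nonpos hz, zero_smul, h0]
  · rw [blowUp, smul_add, norm_polarMap, smul_inv_smul₀ (Real.sqrt_pos.2 hz).ne', ← map_smul,
      ← polarMap, add_sub_cancel]

theorem blowUp_add_one (z : ℂ) : blowUp f A (z + 1) = blowUp f A z := by
  have hpolar : polarMap (z + 1) = polarMap z := by exact_mod_cast polarMap_add_intCast z 1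
  rw [blowUp, blowUp, hpolar, add_re, one_re, AddChar.map_add_eq_mul, fourierChar_one, mul_one]

theorem continuousOn_inv_norm_smul_sub {E F : Type*} [NormedAddCommGroup E] [NormedSpace ℝ E]
    [NormedAddCommGroup F] [NormedSpace ℝ F] {f : E → F} {A : E →L[ℝ] F} {s : Set E}
    (hf : ContinuousOn f s) (h0 : f 0 = 0) (hA : HasFDerivAt f A 0) :
    ContinuousOn (fun x => ‖x‖⁻¹ • (f x - A x)) s := by
  intro x hx
  rcases eq_or_ne x 0 with rfl | hx0
  · refine ContinuousAt.continuousWithinAt ?_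
    rw [ContinuousAt, norm_zero, inv_zero, zero_smul, tendsto_zero_iff_norm_tendsto_zero]
    simpa [norm_smul, h0] using hasFDerivAt_iff_tendsto.1 hA
  · exact (continuousWithinAt_id.norm.inv₀ (norm_ne_zero_iff.2 hx0)).smul
      ((hf x hx).sub A.continuous.continuousWithinAt)

theorem continuousOn_blowUp (hf : ContinuousOn f Disk) (h0 : f 0 = 0) (hA : HasFDerivAt f A 0) :
    ContinuousOn (blowUp f A) strip := by
  have hcirc : Continuous fun z : ℂ => A (𝐞 z.re) := by fun_prop
  exact hcirc.continuousOn.add ((continuousOn_inv_norm_smul_sub hf h0 hA).comp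
    continuous_polarMap.continuousOn fun z hz => polarMap_mem_disk hz.2)

end BlowUp

/-- The lift with angular coordinate `θ` of the disk map `f`, meant to be used on `strip`. -/
noncomputable def liftOfAngle (f : ℂ → ℂ) (θ : ℂ → ℝ) (z : ℂ) : ℂ := ⟨θ z, ‖f (polarMap z)‖ ^ 2⟩

namespace AreaPreservingDiskMap

variable {f : ℂ → ℂ} {A : ℂ →L[ℝ] ℂ} {θ : ℂ → ℝ} {z w : ℂ}

theorem blowUp_ne_zero (hf : AreaPreservingDiskMap f) (hA : A.det ≠ 0) (hz : z ∈ strip) :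
    blowUp f A z ≠ 0 := by
  rcases hz.1.eq_or_lt with h0 | h0
  · rw [blowUp_of_im_nonpos h0.ge]
    exact (map_ne_zero_iff A (injective_of_det_ne_zero hA)).2 (Circle.coe_ne_zero _)
  · refine fun h => hf.map_ne_zero (polarMap_mem_disk hz.2) (polarMap_ne_zero h0) ?_
    rw [← sqrt_smul_blowUp (A := A) hf.map_zero, h, smul_zero]

theorem polarMap_liftOfAngle (hf : AreaPreservingDiskMap f)
    (hθ : ‖blowUp f A z‖ • (𝐞 (θ z) : ℂ) = blowUp f A z) :
    polarMap (liftOfAngle f θ z) = f (polarMap z) := by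
  rw [polarMap, liftOfAngle, Real.sqrt_sq (norm_nonneg _), ← sqrt_smul_blowUp (A := A) hf.map_zero,
    norm_smul, Real.norm_of_nonneg (Real.sqrt_nonneg _), mul_smul, hθ]

theorem fourierChar_re_eq_of_liftOfAngle_eq (hf : AreaPreservingDiskMap f) (hA : A.det ≠ 0)
    (hθ : ∀ z ∈ strip, ‖blowUp f A z‖ • (𝐞 (θ z) : ℂ) = blowUp f A z) (hz : z ∈ strip)
    (hw : w ∈ strip) (hzw : liftOfAngle f θ z = liftOfAngle f θ w) :
    z.im = w.im ∧ 𝐞 z.re = 𝐞 w.re := by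
  have hpolar : polarMap z = polarMap w := by
    apply hf.injOn (polarMap_mem_disk hz.2) (polarMap_mem_disk hw.2)
    rw [← hf.polarMap_liftOfAngle (hθ z hz), hzw, hf.polarMap_liftOfAngle (hθ w hw)]
  have him : z.im = w.im := by
    rw [← norm_polarMap_sq hz.1, hpolar, norm_polarMap_sq hw.1]
  refine ⟨him, Circle.ext ?_⟩
  rcases hz.1.eq_or_lt with h0 | h0
  · have hre : θ z = θ w := congr_arg re hzw
    have hθz := hθ z hz
    have hθw := hθ w hw
    rw [hre, blowUp_of_im_nonpos h0.ge] at hθz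
    rw [blowUp_of_im_nonpos (him ▸ h0.ge)] at hθw
    exact eq_of_norm_smul_eq_map (injective_of_det_ne_zero hA)
      (by rw [Circle.norm_coe, Circle.norm_coe]) hθz hθw
  · rw [polarMap, polarMap, ← him] at hpolar
    exact smul_right_injective ℂ (Real.sqrt_pos.2 h0).ne' hpolar

theorem injOn_liftOfAngle (hf : AreaPreservingDiskMap f) (hA : A.det ≠ 0)
    (hadd : ∀ z, θ (z + 1) = θ z + 1)
    (hθ : ∀ z ∈ strip, ‖blowUp f A z‖ • (𝐞 (θ z) : ℂ) = blowUp f A z) :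
    InjOn (liftOfAngle f θ) strip := by
  intro z hz w hw hzw
  obtain ⟨him, hre⟩ := hf.fourierChar_re_eq_of_liftOfAngle_eq hA hθ hz hw hzw
  obtain ⟨m, hm⟩ := exists_eq_add_intCast_of_fourierChar_eq hre
  obtain rfl : z = w + m := Complex.ext (by simpa using hm) (by simpa using him)
  have hθm : θ (w + m) = θ w + m :=
    AddConstMapClass.map_add_int (⟨θ, hadd⟩ : AddConstMap ℂ ℝ 1 1) w m
  have : θ (w + m) = θ w := congr_arg re hzw
  simp_all

theorem norm_map_polarMap_sq_mem_Ioo (hf : AreaPreservingDiskMap f) (hz : z.im ∈ Ioo (0 : ℝ) 1) :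
    ‖f (polarMap z)‖ ^ 2 ∈ Ioo (0 : ℝ) 1 := by
  have hball : polarMap z ∈ ball 0 1 := by
    rw [mem_ball_zero_iff, norm_polarMap, Real.sqrt_lt' one_pos, one_pow]
    exact hz.2
  have hlt := mem_ball_zero_iff.1 (hf.mapsTo_ball hball)
  have hpos := norm_pos_iff.2
    (hf.map_ne_zero (polarMap_mem_disk hz.2.le) (polarMap_ne_zero hz.1))
  exact ⟨pow_pos hpos 2, pow_lt_one₀ hpos.le hlt two_ne_zero⟩

theorem norm_map_polarMap_ofReal_add_I (hf : AreaPreservingDiskMap f) (x : ℝ) :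
    ‖f (polarMap (x + I))‖ = 1 := by
  have hsphere : polarMap (x + I) ∈ sphere 0 1 := by
    rw [mem_sphere_zero_iff_norm, norm_polarMap]
    simp
  exact mem_sphere_zero_iff_norm.1 (hf.mapsTo_sphere hsphere)

theorem continuousOn_liftOfAngle (hf : AreaPreservingDiskMap f) (hθ : Continuous θ) :
    ContinuousOn (liftOfAngle f θ) strip := by
  have hpolar : ContinuousOn (fun z => f (polarMap z)) strip :=
    hf.continuousOn.comp continuous_polarMap.continuousOn fun z hz => polarMap_mem_disk hz.2
  exact equivRealProdCLM.symm.continuous.comp_continuousOn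
    (hθ.continuousOn.prodMk (hpolar.norm.pow 2))

theorem exists_isLift (hf : AreaPreservingDiskMap f) (hA : HasFDerivAt f A 0) (hdet : 0 < A.det) :
    ∃ F, IsLift f F ∧ ∀ x : ℝ, ‖A (𝐞 x)‖ • (𝐞 (F x).re : ℂ) = A (𝐞 x) := by
  obtain ⟨θ, hθc, hadd, hθ⟩ := exists_continuous_angle hdet
    (continuousOn_blowUp hf.continuousOn hf.map_zero hA) (fun z => hf.blowUp_ne_zero hdet.ne')
    blowUp_add_one fun x => by rw [blowUp_of_im_nonpos (ofReal_im x).le, ofReal_re]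
  refine ⟨_, ⟨.of_strip (hf.continuousOn_liftOfAngle hθc)
    (hf.injOn_liftOfAngle hdet.ne' hadd hθ) (fun z _ => ?_) (fun x => ?_) (fun x => ?_)
    fun z => hf.norm_map_polarMap_sq_mem_Ioo, fun z hz => ?_⟩, fun x => ?_⟩
  · have hpolar : polarMap (z + 1) = polarMap z := by exact_mod_cast polarMap_add_intCast z 1
    rw [liftOfAngle, hadd, hpolar]
    exact Complex.ext rfl (add_zero _).symm
  · rw [liftOfAngle, polarMap_of_im_nonpos (ofReal_im x).le, hf.map_zero, norm_zero,
      zero_pow two_ne_zero]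
  · rw [liftOfAngle, hf.norm_map_polarMap_ofReal_add_I, one_pow]
  · have hz' : z ∈ strip := Ioc_subset_Icc_self hz
    rw [stripProj_of_mem hz', sub_self, add_zero, hf.polarMap_liftOfAngle (hθ z hz')]
  · have hx : (x : ℂ) ∈ strip := by simp [mem_strip]
    have := hθ x hx
    rw [stripProj_of_mem hx, sub_self, add_zero]
    rwa [blowUp_of_im_nonpos (ofReal_im x).le, ofReal_re] at this

theorem exists_isLift_map_eq (hf : AreaPreservingDiskMap f) (hA : HasFDerivAt f A 0)
    (hdet : 0 < A.det) {x r : ℝ} (hr : 0 < r) (hx : A (𝐞 x) = r • (𝐞 x : ℂ)) :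
    ∃ F, IsLift f F ∧ F x = x := by
  obtain ⟨F, hF, hangle⟩ := hf.exists_isLift hA hdet
  have hcirc : (𝐞 (F x).re : ℂ) = 𝐞 x := by
    have := hangle x
    rw [hx, norm_smul, Circle.norm_coe, mul_one, Real.norm_of_nonneg hr.le] at this
    exact smul_right_injective ℂ hr.ne' this
  obtain ⟨m, hm⟩ := exists_eq_add_intCast_of_fourierChar_eq (Circle.ext hcirc)
  refine ⟨_, hF.add_intCast (-m), ?_⟩
  rw [hF.stripMap.map_ofReal, hm]
  push_cast
  ring

theorem exists_iterate_eq_of_eigenvector (hf : AreaPreservingDiskMap f) (hA : HasFDerivAt f A 0)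
    (hdet : 0 < A.det) {r : ℝ} (hr : 0 < r) {v : ℂ} (hv : v ≠ 0) (hAv : A v = r • v) :
    ∃ p ∈ Disk, p ≠ 0 ∧ ∃ n ≥ 1, f^[n] p = p := by
  obtain ⟨z, hz, rfl⟩ := exists_polarMap_eq v
  have hs : √z.im ≠ 0 := by rwa [← norm_polarMap, norm_ne_zero_iff]
  have heigen : A (𝐞 z.re) = r • (𝐞 z.re : ℂ) := by
    rw [polarMap, map_smul, smul_comm] at hAv
    exact smul_right_injective ℂ hs hAv
  obtain ⟨F, hF, hfix⟩ := hf.exists_isLift_map_eq hA hdet hr heigen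
  have hlift (n : ℕ) (m : ℤ) := (hF.iterate n).add_intCast m
  obtain ⟨w, hw, n, hn, m, hm⟩ := hF.stripMap.exists_iterate_eq_add_intCast hfix
    (fun n m => (hlift n m).escapesUp (hf.iterate n))
    fun n m => (hlift n m).escapesUp_halfTurnConj (hf.iterate n)
  refine ⟨polarMap w, polarMap_mem_disk hw.2, polarMap_ne_zero hw.1, n, hn, ?_⟩
  rw [← (hF.iterate n).semiconj w hw, hm, polarMap_add_intCast]

end AreaPreservingDiskMap

theorem det_pow {E : Type*} [NormedAddCommGroup E] [NormedSpace ℝ E] (A : E →L[ℝ] E) (n : ℕ) :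
    (A ^ n).det = A.det ^ n := by
  rw [ContinuousLinearMap.det, ContinuousLinearMap.toLinearMap_pow, map_pow]

theorem nondegeneracy_of_pseudorotation_general {f : ℂ → ℂ} (hf : AreaPreservingDiskMap f)
    {A : ℂ →L[ℝ] ℂ} (hA : HasFDerivAt f A 0) (hdet : 0 < A.det)
    (hper : ∀ z ∈ Disk, z ≠ 0 → ∀ n : ℕ, 1 ≤ n → f^[n] z ≠ z) {n : ℕ} (hn : 1 ≤ n) (r : ℝ) :
    ¬ Module.End.HasEigenvalue ((A ^ n : ℂ →L[ℝ] ℂ) : ℂ →ₗ[ℝ] ℂ) r := by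
  intro heigen
  obtain ⟨v, hv⟩ := heigen.exists_hasEigenvector
  have hr : r ≠ 0 := by
    rintro rfl
    have hinj := injective_of_det_ne_zero (A := A ^ n) (by rw [det_pow]; positivity)
    exact hv.2 ((map_eq_zero_iff (A ^ n) hinj).1 (hv.apply_eq_smul.trans (zero_smul ℝ v)))
  have hsq : (A ^ (n * 2)) v = r ^ 2 • v := by
    rw [pow_mul]
    exact hv.pow_apply 2
  obtain ⟨p, hp, hp0, m, hm, hfix⟩ := (hf.iterate (n * 2)).exists_iterate_eq_of_eigenvector
    (hA.iterate hf.map_zero _) (by rw [det_pow]; positivity) (by positivity) hv.2 hsq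
  rw [← Function.iterate_mul] at hfix
  exact hper p hp hp0 _ (by nlinarith) hfix

/-! ### Smooth diffeomorphisms of the disk -/

theorem disk_mem_nhds_zero : Disk ∈ nhds (0 : ℂ) := closedBall_mem_nhds _ one_pos

theorem interior_disk : interior Disk = ball 0 1 := interior_closedBall _ one_ne_zero

theorem uniqueDiffOn_disk : UniqueDiffOn ℝ Disk :=
  uniqueDiffOn_convex (convex_closedBall 0 1) (interior_disk ▸ nonempty_ball.2 one_pos)

theorem mapsTo_interior_of_det_fderivWithin_ne_zero {E : Type*} [NormedAddCommGroup E]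
    [NormedSpace ℝ E] [FiniteDimensional ℝ E] {g : E → E} {s t : Set E}
    (hg : ContDiffOn ℝ 1 g s) (hst : MapsTo g s t)
    (hdet : ∀ x ∈ s, (fderivWithin ℝ g s x).det ≠ 0) :
    MapsTo g (interior s) (interior t) := by
  intro x hx
  have hs := mem_interior_iff_mem_nhds.1 hx
  have hderiv := (hg.contDiffAt hs).hasStrictFDerivAt one_ne_zero
  have hsurj : (fderiv ℝ g x).range = ⊤ := by
    rw [← fderivWithin_of_mem_nhds hs]
    exact LinearMap.range_eq_top.2
      (LinearMap.equivOfDetNeZero _ (hdet x (interior_subset hx))).surjective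
  rw [mem_interior_iff_mem_nhds, ← hderiv.map_nhds_eq_of_surj hsurj]
  exact Filter.mem_map.2 (Filter.mem_of_superset hs hst)

namespace SmoothDiskDiffeo

variable (φ : SmoothDiskDiffeo)

/-- The inverse of a diffeomorphism of the closed disk. -/
def symm : SmoothDiskDiffeo where
  toFun := φ.invFun
  invFun := φ.toFun
  mapsTo := φ.mapsTo_inv
  mapsTo_inv := φ.mapsTo
  left_inv := φ.right_inv
  right_inv := φ.left_inv
  smooth := φ.smooth_inv
  smooth_inv := φ.smooth

theorem injOn : InjOn φ.toFun Disk := LeftInvOn.injOn φ.left_inv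

theorem hasFDerivWithinAt {z : ℂ} (hz : z ∈ Disk) :
    HasFDerivWithinAt φ.toFun (fderivWithin ℝ φ.toFun Disk z) Disk z :=
  (φ.smooth.differentiableOn (by simp) z hz).hasFDerivWithinAt

theorem det_fderivWithin_ne_zero {z : ℂ} (hz : z ∈ Disk) :
    (fderivWithin ℝ φ.toFun Disk z).det ≠ 0 := by
  have hcomp := (φ.symm.hasFDerivWithinAt (φ.mapsTo hz)).comp z (φ.hasFDerivWithinAt hz) φ.mapsTo
  have hid : HasFDerivWithinAt (φ.symm.toFun ∘ φ.toFun) (.id ℝ ℂ) Disk z :=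
    (hasFDerivWithinAt_id z Disk).congr φ.left_inv (φ.left_inv z hz)
  have hdet := congr_arg ContinuousLinearMap.det ((uniqueDiffOn_disk z hz).eq hcomp hid)
  have hmul := (LinearMap.det_comp (fderivWithin ℝ φ.symm.toFun Disk (φ.toFun z) : ℂ →ₗ[ℝ] ℂ)
    (fderivWithin ℝ φ.toFun Disk z : ℂ →ₗ[ℝ] ℂ)).symm.trans (hdet.trans LinearMap.det_id)
  exact right_ne_zero_of_mul_eq_one hmul

theorem mapsTo_ball : MapsTo φ.toFun (ball 0 1) (ball 0 1) := by
  have := mapsTo_interior_of_det_fderivWithin_ne_zero (φ.smooth.of_le (by simp)) φ.mapsTo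
    fun z => φ.det_fderivWithin_ne_zero
  rwa [interior_disk] at this

theorem mapsTo_sphere : MapsTo φ.toFun (sphere 0 1) (sphere 0 1) := by
  intro z hz
  have hzD : z ∈ Disk := sphere_subset_closedBall hz
  refine mem_sphere.2 ((mem_closedBall.1 (φ.mapsTo hzD)).eq_of_not_lt fun hlt => ?_)
  have hball : φ.invFun (φ.toFun z) ∈ ball 0 1 := φ.symm.mapsTo_ball (mem_ball.2 hlt)
  rw [φ.left_inv z hzD, mem_ball, mem_sphere.1 hz] at hball
  exact lt_irrefl _ hball

theorem areaPreservingDiskMap (harea : ∀ z ∈ Disk, (fderivWithin ℝ φ.toFun Disk z).det = 1)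
    (hfix : φ.toFun 0 = 0) : AreaPreservingDiskMap φ.toFun where
  continuousOn := φ.smooth.continuousOn
  injOn := φ.injOn
  mapsTo_ball := φ.mapsTo_ball
  mapsTo_sphere := φ.mapsTo_sphere
  map_zero := hfix
  volume_image _ hE hm := addHaar_image_eq_of_abs_det_eq_one _ hm
    (fun _ hz => (φ.hasFDerivWithinAt (hE hz)).mono hE) (φ.injOn.mono hE)
    fun z hz => by rw [harea z (hE hz), abs_one]

theorem hasFDerivAt_zero : HasFDerivAt φ.toFun (fderivWithin ℝ φ.toFun Disk 0) 0 :=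
  (φ.hasFDerivWithinAt (mem_of_mem_nhds disk_mem_nhds_zero)).hasFDerivAt disk_mem_nhds_zero

theorem fderivWithin_iterate (hfix : φ.toFun 0 = 0) (n : ℕ) :
    fderivWithin ℝ φ.toFun^[n] Disk 0 = fderivWithin ℝ φ.toFun Disk 0 ^ n := by
  rw [fderivWithin_of_mem_nhds disk_mem_nhds_zero]
  exact (φ.hasFDerivAt_zero.iterate hfix n).fderiv

end SmoothDiskDiffeo

/-- **Nondegeneracy of the fixed point of an irrational pseudo-rotation.**
For every `n ≥ 1` the linearization `D(φⁿ)(0)` does not have `1` as an eigenvalue,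
and `Dφ(0)` has no real eigenvalues at all. -/
theorem nondegeneracy_of_pseudorotation (φ : SmoothDiskDiffeo)
    (harea : ∀ z ∈ Disk, (fderivWithin ℝ φ.toFun Disk z).det = 1)
    (hfix : φ.toFun 0 = 0)
    (hper : ∀ z ∈ Disk, z ≠ 0 → ∀ n : ℕ, 1 ≤ n → φ.toFun^[n] z ≠ z) :
    (∀ n : ℕ, 1 ≤ n →
      ¬ Module.End.HasEigenvalue
          (fderivWithin ℝ (φ.toFun^[n]) Disk 0 : ℂ →ₗ[ℝ] ℂ) 1) ∧
    (∀ r : ℝ,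
      ¬ Module.End.HasEigenvalue
          (fderivWithin ℝ φ.toFun Disk 0 : ℂ →ₗ[ℝ] ℂ) r) := by
  have hdet := harea 0 (mem_of_mem_nhds disk_mem_nhds_zero)
  have hno {n : ℕ} (hn : 1 ≤ n) := nondegeneracy_of_pseudorotation_general
    (φ.areaPreservingDiskMap harea hfix) φ.hasFDerivAt_zero (hdet ▸ one_pos) hper hn
  exact ⟨fun n hn => φ.fderivWithin_iterate hfix n ▸ hno hn 1,
    fun r => by simpa only [pow_one] using hno le_rfl r⟩
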